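/- arXiv:1012.0433 — 5 statements merged into one kernel-verified Lean document; each statement's English description precedes it below -/
import Mathlib

section
/- The product Δ₁·Δ₂ = Σ_{n=max(|Δ₁|,|Δ₂|)}^{|Δ₁|+|Δ₂|} {Δ₁Δ₂}_n, extended bilinearly, endows the graded vector space A_∞° = ⊕_{n≥1} A_n with the structure of a commutative associative algebra: for all Young diagrams Δ₁, Δ₂, Δ₃ one has Δ₁·Δ₂ = Δ₂·Δ₁ and (Δ₁·Δ₂)·Δ₃ = Δ₁·(Δ₂·Δ₃). -/
open scoped Classical

/-- The full cycle type of a permutation of `Fin n`, including fixed points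
(i.e. rows of length 1). -/
noncomputable def fullCycleType {n : ℕ} (g : Equiv.Perm (Fin n)) : Multiset ℕ :=
  g.cycleType + Multiset.replicate (n - g.cycleType.sum) 1

/-- `Δ^k` : the Young diagram obtained from `Δ` by adding `k` rows of length 1,
realized as a partition of a given `m ≥ |Δ| `. -/
def padTo {n : ℕ} (Δ : n.Partition) (m : ℕ) (h : n ≤ m) : m.Partition where
  parts := Δ.parts + Multiset.replicate (m - n) 1
  parts_pos := by
    intro i hi
    rcases Multiset.mem_add.mp hi with h1 | h2
    · exact Δ.parts_pos h1
    · simp [Multiset.eq_of_mem_replicate h2]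
  parts_sum := by
    simp [Δ.parts_sum]
    omega

/-- The class sum `G_n(Δ)` : sum of all permutations of cycle type `Δ` in the group
algebra `ℚ[S_n]`. -/
noncomputable def classSum (n : ℕ) (Δ : n.Partition) :
    MonoidAlgebra ℚ (Equiv.Perm (Fin n)) :=
  ∑ g ∈ Finset.univ.filter (fun g => fullCycleType g = Δ.parts),
    MonoidAlgebra.single g (1 : ℚ)

/-- The coordinates of a central element of `ℚ[S_n]` in the basis of class sums:
the (average) coefficient on the conjugacy class of cycle type `Δ`. -/
noncomputable def classCoeff {n : ℕ} (x : MonoidAlgebra ℚ (Equiv.Perm (Fin n)))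
    (Δ : n.Partition) : ℚ :=
  (∑ g ∈ Finset.univ.filter (fun g => fullCycleType g = Δ.parts), x.coeff g) /
    ((Finset.univ.filter (fun g : Equiv.Perm (Fin n) => fullCycleType g = Δ.parts)).card : ℚ)

/-- An element of `A_n` (the centre of `ℚ[S_n]`), written in coordinates with respect to
the basis of class sums, viewed inside the group algebra. -/
noncomputable def embedCenter {n : ℕ} (x : n.Partition → ℚ) :
    MonoidAlgebra ℚ (Equiv.Perm (Fin n)) :=
  ∑ Δ : n.Partition, x Δ • classSum n Δ

/-- The product `∘` of the algebra `A_n` in the coordinates given by class sums. -/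
noncomputable def circ {n : ℕ} (x y : n.Partition → ℚ) : n.Partition → ℚ :=
  fun Δ => classCoeff (embedCenter x * embedCenter y) Δ

/-- The coordinates of a single Young diagram `Δ`, i.e. of the class sum `G_n(Δ) ∈ A_n`. -/
noncomputable def diagC {n : ℕ} (Δ : n.Partition) : n.Partition → ℚ :=
  fun Λ => if Λ = Δ then 1 else 0

/-- The padding map `ρ_{m-n} : A_n → A_m`,
`ρ_k(Δ) = ((r+k)!/(r!·k!))·Δ^k` where `r` is the number of rows of length 1 of `Δ`
(in class-sum coordinates); it is `0` when `m < n`. -/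
noncomputable def rhoTo {n : ℕ} (m : ℕ) (x : n.Partition → ℚ) : m.Partition → ℚ :=
  fun Λ =>
    if n ≤ m then
      ∑ Δ : n.Partition,
        (if Λ.parts = Δ.parts + Multiset.replicate (m - n) 1 then
          (((Δ.parts.count 1 + (m - n)).factorial : ℚ) /
            ((Δ.parts.count 1).factorial * (m - n).factorial)) * x Δ
        else 0)
    else 0

/-- The element `{Δ₁Δ₂}_n ∈ A_n`, defined by the recursion
`{Δ₁Δ₂}_n = ρ_{n−|Δ₁|}(Δ₁) ∘ ρ_{n−|Δ₂|}(Δ₂) − Σ_{k=max(|Δ₁|,|Δ₂|)}^{n−1} ρ_{n−k}({Δ₁Δ₂}_k)`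
for `max(|Δ₁|,|Δ₂|) ≤ n ≤ |Δ₁|+|Δ₂|` (and `0` outside this range). -/
noncomputable def bracket {n₁ n₂ : ℕ} (Δ₁ : n₁.Partition) (Δ₂ : n₂.Partition) :
    (n : ℕ) → n.Partition → ℚ
  | n =>
    if max n₁ n₂ ≤ n ∧ n ≤ n₁ + n₂ then
      circ (rhoTo n (diagC Δ₁)) (rhoTo n (diagC Δ₂)) -
        ∑ k ∈ (Finset.Ico (max n₁ n₂) n).attach,
          rhoTo n (bracket Δ₁ Δ₂ k.1)
    else 0
  termination_by n => n
  decreasing_by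
    have := Finset.mem_Ico.mp k.2
    omega

/-- The underlying graded vector space of the algebra `A_∞° = ⊕_n A_n`. -/
abbrev Ainf : Type := Π₀ n : ℕ, (Nat.Partition n → ℚ)

/-- A Young diagram `Δ` as an element of `A_∞°`. -/
noncomputable def ofDiag {n : ℕ} (Δ : n.Partition) : Ainf :=
  DFinsupp.single n (diagC Δ)

/-- The product of two Young diagrams in `A_∞°`:
`Δ₁·Δ₂ = Σ_{n=max(|Δ₁|,|Δ₂|)}^{|Δ₁|+|Δ₂|} {Δ₁Δ₂}_n`. -/
noncomputable def diagMul {n₁ n₂ : ℕ} (Δ₁ : n₁.Partition) (Δ₂ : n₂.Partition) : Ainf :=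
  ∑ n ∈ Finset.Icc (max n₁ n₂) (n₁ + n₂), DFinsupp.single n (bracket Δ₁ Δ₂ n)

/-- The bilinear extension of the product of Young diagrams to all of `A_∞°`. -/
noncomputable def mulAinf (x y : Ainf) : Ainf :=
  ∑ n₁ ∈ x.support, ∑ n₂ ∈ y.support,
    ∑ Δ₁ : Nat.Partition n₁, ∑ Δ₂ : Nat.Partition n₂,
      (x n₁ Δ₁ * y n₂ Δ₂) • diagMul Δ₁ Δ₂

namespace YD

open Equiv Equiv.Perm

/-- The multiset of cycle lengths of `g` viewed as acting on a set of size `n`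
containing its support. -/
noncomputable def tp {m : ℕ} (n : ℕ) (g : Perm (Fin m)) : Multiset ℕ :=
  g.cycleType + Multiset.replicate (n - g.support.card) 1

lemma full_eq_tp {m : ℕ} (g : Perm (Fin m)) : fullCycleType g = tp m g := by
  unfold fullCycleType tp; rw [sum_cycleType]

/-- The type as a partition. -/
noncomputable def tpart {m : ℕ} (n : ℕ) (g : Perm (Fin m)) (h : g.support.card ≤ n) :
    n.Partition where
  parts := tp n g
  parts_pos := by
    intro i hi
    rcases Multiset.mem_add.mp hi with h1 | h2
    · exact zero_lt_one.trans (one_lt_of_mem_cycleType h1)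
    · simp [Multiset.eq_of_mem_replicate h2]
  parts_sum := by
    simp [tp, sum_cycleType]; omega

lemma supp_le {m : ℕ} (g : Perm (Fin m)) : g.support.card ≤ m := by
  simpa using Finset.card_le_univ g.support

noncomputable def ct {m : ℕ} (g : Perm (Fin m)) : m.Partition := tpart m g (supp_le g)

lemma ct_parts {m : ℕ} (g : Perm (Fin m)) : (ct g).parts = tp m g := rfl

lemma tp_filter {m : ℕ} (n : ℕ) (g : Perm (Fin m)) :
    (tp n g).filter (fun i => 2 ≤ i) = g.cycleType := by
  unfold tp
  rw [Multiset.filter_add, Multiset.filter_eq_self.2 fun _ => two_le_of_mem_cycleType,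
    Multiset.filter_eq_nil.2 fun a h => ?_, add_zero]
  rw [Multiset.eq_of_mem_replicate h]
  decide

lemma full_iff {m : ℕ} (g : Perm (Fin m)) (Δ : m.Partition) :
    fullCycleType g = Δ.parts ↔ Δ = ct g := by
  rw [full_eq_tp, Nat.Partition.ext_iff, ct_parts, eq_comm]

lemma filter_add_ones {n : ℕ} (Δ : n.Partition) :
    Δ.parts = Δ.parts.filter (fun i => 2 ≤ i) + Multiset.replicate (Δ.parts.count 1) 1 := by
  conv_lhs => rw [← Multiset.filter_add_not (fun i => 2 ≤ i) Δ.parts]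
  congr 1
  rw [← Multiset.filter_eq']
  apply Multiset.filter_congr
  intro x hx
  have := Δ.parts_pos hx
  omega

lemma ct_surj {m : ℕ} (Λ : m.Partition) : ∃ g : Perm (Fin m), ct g = Λ := by
  have h0 := filter_add_ones Λ
  have h1 := congrArg Multiset.sum h0
  rw [Λ.parts_sum, Multiset.sum_add, Multiset.sum_replicate] at h1
  have : ∃ g : Perm (Fin m), g.cycleType = Λ.parts.filter (fun i => 2 ≤ i) := by
    rw [exists_with_cycleType_iff]
    constructor
    · simp only [Fintype.card_fin]; omega
    · intro a ha; exact (Multiset.mem_filter.mp ha).2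
  obtain ⟨g, hg⟩ := this
  refine ⟨g, ?_⟩
  rw [Nat.Partition.ext_iff, ct_parts, tp, ← sum_cycleType, hg]
  conv_rhs => rw [h0]
  congr 2
  simp at h1
  omega

lemma ct_eq_iff {m : ℕ} (g h : Perm (Fin m)) : ct g = ct h ↔ IsConj g h := by
  rw [isConj_iff_cycleType_eq]
  constructor
  · intro e
    rw [← tp_filter m g, ← tp_filter m h, ← ct_parts, ← ct_parts, e]
  · intro e
    rw [Nat.Partition.ext_iff, ct_parts, ct_parts, tp, tp, ← sum_cycleType, ← sum_cycleType, e]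

lemma embed_coeff {n : ℕ} (x : n.Partition → ℚ) (g : Perm (Fin n)) :
    (embedCenter x).coeff g = x (ct g) := by
  unfold embedCenter classSum
  simp only [MonoidAlgebra.coeff_sum, MonoidAlgebra.coeff_smul, Finsupp.coe_finsetSum,
    Finset.sum_apply, Finsupp.smul_apply, smul_eq_mul, MonoidAlgebra.coeff_single, Finsupp.single_apply,
    Finset.sum_ite_eq', Finset.mem_filter, Finset.mem_univ, true_and, full_iff]
  simp

lemma embed_eq {n : ℕ} (x : n.Partition → ℚ) :
    embedCenter x = ∑ g, MonoidAlgebra.single g (x (ct g)) := by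
  ext g
  rw [embed_coeff]
  simp only [MonoidAlgebra.coeff_sum, MonoidAlgebra.coeff_single, Finsupp.coe_finsetSum,
    Finset.sum_apply, Finsupp.single_apply, Finset.sum_ite_eq', Finset.mem_univ, if_true]

lemma embed_inj {n : ℕ} {x y : n.Partition → ℚ} (h : embedCenter x = embedCenter y) : x = y := by
  funext Λ
  obtain ⟨g, rfl⟩ := ct_surj Λ
  rw [← embed_coeff x, h, embed_coeff]

lemma mul_coeff {n : ℕ} (x y : n.Partition → ℚ) (g : Perm (Fin n)) :
    (embedCenter x * embedCenter y).coeff g = ∑ h, x (ct h) * y (ct (h⁻¹ * g)) := by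
  rw [embed_eq, embed_eq, Finset.sum_mul_sum]
  simp only [MonoidAlgebra.coeff_sum, Finsupp.coe_finsetSum,
    Finset.sum_apply, MonoidAlgebra.single_mul_single, MonoidAlgebra.coeff_single, Finsupp.single_apply]
  refine Finset.sum_congr rfl fun h _ => ?_
  have : ∀ k : Perm (Fin n), (h * k = g) ↔ k = h⁻¹ * g := fun k => by
    rw [eq_inv_mul_iff_mul_eq]
  simp only [this, Finset.sum_ite_eq', Finset.mem_univ, if_true]

lemma ct_conj {n : ℕ} (c g : Perm (Fin n)) : ct (c * g * c⁻¹) = ct g := by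
  rw [ct_eq_iff]
  exact (isConj_iff.2 ⟨c, rfl⟩).symm

lemma mul_coeff_conj {n : ℕ} (x y : n.Partition → ℚ) (c g : Perm (Fin n)) :
    (embedCenter x * embedCenter y).coeff (c * g * c⁻¹) =
      (embedCenter x * embedCenter y).coeff g := by
  rw [mul_coeff, mul_coeff]
  symm
  refine Fintype.sum_equiv (MulAut.conj c).toEquiv _ _ fun h => ?_
  have e : (MulAut.conj c).toEquiv h = c * h * c⁻¹ := rfl
  rw [e, ct_conj]
  congr 2
  rw [← ct_conj c]
  congr 1
  group

lemma classCoeff_ct {n : ℕ} (x : MonoidAlgebra ℚ (Perm (Fin n)))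
    (hx : ∀ c g, x.coeff (c * g * c⁻¹) = x.coeff g) (g : Perm (Fin n)) :
    classCoeff x (ct g) = x.coeff g := by
  unfold classCoeff
  have h1 : ∀ h ∈ Finset.univ.filter (fun h : Perm (Fin n) => fullCycleType h = (ct g).parts),
      x.coeff h = x.coeff g := by
    intro h hh
    rw [Finset.mem_filter, full_iff, ct_eq_iff] at hh
    obtain ⟨c, hc⟩ := isConj_iff.1 hh.2
    rw [← hc, hx]
  rw [Finset.sum_congr rfl h1, Finset.sum_const, nsmul_eq_mul]
  rw [mul_div_cancel_left₀]
  have : g ∈ Finset.univ.filter (fun h : Perm (Fin n) => fullCycleType h = (ct g).parts) := by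
    rw [Finset.mem_filter, full_iff]; simp
  exact_mod_cast (Finset.card_pos.2 ⟨g, this⟩).ne'

lemma circ_ct {n : ℕ} (x y : n.Partition → ℚ) (g : Perm (Fin n)) :
    circ x y (ct g) = ∑ h, x (ct h) * y (ct (h⁻¹ * g)) := by
  unfold circ
  rw [classCoeff_ct _ (mul_coeff_conj x y), mul_coeff]

lemma embed_circ {n : ℕ} (x y : n.Partition → ℚ) :
    embedCenter (circ x y) = embedCenter x * embedCenter y := by
  ext g
  rw [embed_coeff, circ_ct, mul_coeff]

lemma circ_assoc {n : ℕ} (x y z : n.Partition → ℚ) :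
    circ (circ x y) z = circ x (circ y z) := by
  apply embed_inj
  simp only [embed_circ, mul_assoc]

lemma circ_comm {n : ℕ} (x y : n.Partition → ℚ) : circ x y = circ y x := by
  funext Λ
  obtain ⟨g, rfl⟩ := ct_surj Λ
  rw [circ_ct, circ_ct]
  refine Fintype.sum_equiv ((Equiv.inv _).trans (Equiv.mulRight g)) _ _ fun h => ?_
  have e : ((Equiv.inv _).trans (Equiv.mulRight g)) h = h⁻¹ * g := rfl
  have e2 : ct ((h⁻¹ * g)⁻¹ * g) = ct h := by
    rw [← ct_conj g⁻¹ h]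
    apply congrArg
    simp [mul_inv_rev, mul_assoc]
  rw [e, mul_comm, e2]

/-- Extension of coordinates to arbitrary multisets. -/
noncomputable def X {n : ℕ} (x : n.Partition → ℚ) (μ : Multiset ℕ) : ℚ :=
  ∑ Δ : n.Partition, if μ = Δ.parts then x Δ else 0

lemma X_parts {n : ℕ} (x : n.Partition → ℚ) (Δ : n.Partition) : X x Δ.parts = x Δ := by
  unfold X
  simp only [← Nat.Partition.ext_iff]
  simp

lemma card_between {m : ℕ} (A : Finset (Fin m)) (n : ℕ) (h : A.card ≤ n) :
    (Finset.univ.filter (fun S : Finset (Fin m) => S.card = n ∧ A ⊆ S)).card =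
      (m - A.card).choose (n - A.card) := by
  have : (m - A.card) = (Aᶜ).card := by rw [Finset.card_compl, Fintype.card_fin]
  rw [this, ← Finset.card_powersetCard]
  refine Finset.card_nbij' (fun S => S \ A) (fun T => T ∪ A) ?_ ?_ ?_ ?_
  · intro S hS
    simp only [Finset.coe_filter, Finset.mem_univ, true_and, Set.mem_ofPred_eq] at hS
    simp only [Finset.mem_coe, Finset.mem_powersetCard]
    constructor
    · intro a ha; simp at ha ⊢; exact ha.2
    · rw [Finset.card_sdiff_of_subset hS.2, hS.1]
  · intro T hT
    simp only [Finset.mem_coe, Finset.mem_powersetCard] at hT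
    simp only [Finset.coe_filter, Finset.mem_univ, true_and, Set.mem_ofPred_eq]
    refine ⟨?_, Finset.subset_union_right⟩
    rw [Finset.card_union_of_disjoint, hT.2]
    · omega
    · rw [Finset.disjoint_left]; intro a ha; simpa using hT.1 ha
  · intro S hS
    simp only [Finset.coe_filter, Finset.mem_univ, true_and, Set.mem_ofPred_eq] at hS
    exact Finset.sdiff_union_of_subset hS.2
  · intro T hT
    simp only [Finset.mem_coe, Finset.mem_powersetCard] at hT
    have : Disjoint T A := by
      rw [Finset.disjoint_left]; intro a ha; simpa using hT.1 ha
    show (T ∪ A) \ A = T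
    rw [Finset.union_sdiff_right, Finset.sdiff_eq_self_of_disjoint this]

lemma tp_count {m : ℕ} (n : ℕ) (g : Perm (Fin m)) :
    (tp n g).count 1 = n - g.support.card := by
  unfold tp
  rw [Multiset.count_add, Multiset.count_replicate_self, Multiset.count_eq_zero_of_notMem, zero_add]
  intro h
  have := two_le_of_mem_cycleType h
  omega

lemma rho_ct {n m : ℕ} (x : n.Partition → ℚ) (g : Perm (Fin m)) :
    rhoTo m x (ct g) =
      ∑ S : Finset (Fin m), if S.card = n ∧ g.support ⊆ S then X x (tp n g) else 0 := by
  rw [← Finset.sum_filter, Finset.sum_const, nsmul_eq_mul]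
  unfold rhoTo
  by_cases hnm : n ≤ m
  · rw [if_pos hnm]
    by_cases hs : g.support.card ≤ n
    · rw [card_between _ _ hs, X, Finset.mul_sum]
      refine Finset.sum_congr rfl fun Δ _ => ?_
      have e : (ct g).parts = tp n g + Multiset.replicate (m - n) 1 := by
        rw [ct_parts, tp, tp, add_assoc, ← Multiset.replicate_add]
        congr 2; omega
      simp only [e, add_left_inj]
      split_ifs with h
      · rw [← h, tp_count]
        congr 1
        rw [Nat.cast_choose ℚ (by omega : n - g.support.card ≤ m - g.support.card)]
        congr 3
        · congr 1; omega
        · congr 1; omega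
      · simp
    · have h1 : (Finset.univ.filter (fun S : Finset (Fin m) => S.card = n ∧ g.support ⊆ S)) = ∅ := by
        rw [Finset.filter_eq_empty_iff]
        rintro S - ⟨h1, h2⟩
        exact hs (h1 ▸ Finset.card_le_card h2)
      rw [h1]
      simp only [Finset.card_empty, Nat.cast_zero, zero_mul]
      refine Finset.sum_eq_zero fun Δ _ => if_neg fun h => hs ?_
      rw [ct_parts] at h
      have h2 := congrArg (Multiset.filter (fun i => 2 ≤ i)) h
      rw [tp_filter, Multiset.filter_add, Multiset.filter_eq_nil (s := Multiset.replicate _ _) |>.2,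
        add_zero] at h2
      · have h3 := congrArg Multiset.sum (filter_add_ones Δ)
        rw [Δ.parts_sum, Multiset.sum_add, ← h2, sum_cycleType] at h3
        omega
      · intro a ha; rw [Multiset.eq_of_mem_replicate ha]; decide
  · rw [if_neg hnm]
    have h1 : (Finset.univ.filter (fun S : Finset (Fin m) => S.card = n ∧ g.support ⊆ S)) = ∅ := by
      rw [Finset.filter_eq_empty_iff]
      rintro S - ⟨h1, h2⟩
      have := Finset.card_le_univ S
      simp at this; omega
    rw [h1]; simp

/-- Condition on a factorization of a partial permutation. -/
def Cond (n₁ n₂ : ℕ) {m : ℕ} (S : Finset (Fin m)) (g : Perm (Fin m))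
    (p : Perm (Fin m) × Finset (Fin m) × Finset (Fin m)) : Prop :=
  (p.2.1.card = n₁ ∧ p.1.support ⊆ p.2.1) ∧ (p.2.2.card = n₂ ∧ (p.1⁻¹ * g).support ⊆ p.2.2) ∧
    p.2.1 ∪ p.2.2 = S

/-- Coefficient of a partial permutation in the product. -/
noncomputable def C {n₁ n₂ : ℕ} (x : n₁.Partition → ℚ) (y : n₂.Partition → ℚ) (m : ℕ)
    (S : Finset (Fin m)) (g : Perm (Fin m)) : ℚ :=
  ∑ p ∈ Finset.univ.filter (Cond n₁ n₂ S g), X x (tp n₁ p.1) * X y (tp n₂ (p.1⁻¹ * g))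

lemma circ_rho {n₁ n₂ : ℕ} (x : n₁.Partition → ℚ) (y : n₂.Partition → ℚ) (m : ℕ)
    (g : Perm (Fin m)) :
    circ (rhoTo m x) (rhoTo m y) (ct g) = ∑ S, C x y m S g := by
  rw [circ_ct]
  simp only [rho_ct, C, Finset.sum_filter]
  rw [Finset.sum_comm, Fintype.sum_prod_type]
  refine Finset.sum_congr rfl fun h _ => ?_
  rw [Finset.sum_mul_sum, Fintype.sum_prod_type]
  refine Finset.sum_congr rfl fun S₁ _ => Finset.sum_congr rfl fun S₂ _ => ?_
  simp only [Cond]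
  rw [Finset.sum_eq_single (S₁ ∪ S₂)]
  · by_cases h1 : S₁.card = n₁ ∧ h.support ⊆ S₁ <;>
      by_cases h2 : S₂.card = n₂ ∧ (h⁻¹ * g).support ⊆ S₂ <;> simp [h1, h2]
  · intro S _ hS
    exact if_neg fun hh => hS hh.2.2.symm
  · simp

lemma C_zero {n₁ n₂ : ℕ} (x : n₁.Partition → ℚ) (y : n₂.Partition → ℚ) (m : ℕ)
    (S : Finset (Fin m)) (g : Perm (Fin m))
    (h : ¬ (S.card ∈ Finset.Icc (max n₁ n₂) (n₁ + n₂) ∧ g.support ⊆ S)) : C x y m S g = 0 := by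
  unfold C
  rw [Finset.filter_false_of_mem, Finset.sum_empty]
  rintro ⟨k, S₁, S₂⟩ - ⟨⟨h1, h2⟩, ⟨h3, h4⟩, h5⟩
  simp only at h1 h2 h3 h4 h5
  apply h
  constructor
  · rw [Finset.mem_Icc, ← h5, ← h1, ← h3]
    exact ⟨max_le (Finset.card_le_card Finset.subset_union_left)
      (Finset.card_le_card Finset.subset_union_right), Finset.card_union_le _ _⟩
  · rw [← h5]
    have := support_mul_le k (k⁻¹ * g)
    rw [mul_inv_cancel_left] at this
    exact this.trans (Finset.union_subset_union h2 h4)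

section transport
variable {k m : ℕ} {S : Finset (Fin m)} (e : Fin k ≃ {a // a ∈ S})

/-- The embedding underlying `e`. -/
def emb : Fin k ↪ Fin m := e.toEmbedding.trans (Function.Embedding.subtype _)

lemma supp_ext (g : Perm (Fin k)) : (g.extendDomain e).support = g.support.map (emb e) :=
  support_extend_domain e

lemma tp_ext (n : ℕ) (g : Perm (Fin k)) : tp n (g.extendDomain e) = tp n g := by
  unfold tp
  rw [cycleType_extendDomain, supp_ext, Finset.card_map]

lemma map_emb_univ : Finset.univ.map (emb e) = S := by
  ext a
  simp only [Finset.mem_map, Finset.mem_univ, true_and]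
  constructor
  · rintro ⟨b, rfl⟩; exact (e b).2
  · intro h; exact ⟨e.symm ⟨a, h⟩, by simp [emb]⟩

lemma ext_surj (g : Perm (Fin m)) (h : g.support ⊆ S) :
    ∃ g' : Perm (Fin k), g'.extendDomain e = g := by
  have hg : ∀ a, g a ∈ S ↔ a ∈ S := by
    intro a
    by_cases ha : g a = a
    · rw [ha]
    · have h1 : a ∈ g.support := mem_support.2 ha
      have h2 : g a ∈ g.support := apply_mem_support.2 h1
      simp [h h1, h h2]
  refine ⟨e.symm.permCongr (g.subtypePerm hg), ?_⟩
  ext a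
  by_cases ha : a ∈ S
  · rw [extendDomain_apply_subtype _ _ ha]
    simp
  · rw [extendDomain_apply_not_subtype _ _ ha]
    by_contra hne
    exact ha (h (mem_support.2 fun h => hne (by rw [h])))

lemma C_transport {n₁ n₂ : ℕ} (x : n₁.Partition → ℚ) (y : n₂.Partition → ℚ)
    (g : Perm (Fin k)) :
    C x y m S (g.extendDomain e) = C x y k Finset.univ g := by
  unfold C
  symm
  refine Finset.sum_bij (fun p _ => (p.1.extendDomain e, p.2.1.map (emb e), p.2.2.map (emb e)))
    ?_ ?_ ?_ ?_
  · rintro ⟨h, S₁, S₂⟩ hp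
    rw [Finset.mem_filter] at hp ⊢
    obtain ⟨-, ⟨h1, h2⟩, ⟨h3, h4⟩, h5⟩ := hp
    simp only at h1 h2 h3 h4 h5
    refine ⟨Finset.mem_univ _, ⟨?_, ?_⟩, ⟨?_, ?_⟩, ?_⟩
    · simpa using h1
    · simp only [supp_ext, Finset.map_subset_map]; exact h2
    · simpa using h3
    · simp only [extendDomain_inv, extendDomain_mul, supp_ext, Finset.map_subset_map]; exact h4
    · simp only [← Finset.map_union, h5, map_emb_univ]
  · rintro ⟨h, S₁, S₂⟩ - ⟨h', S₁', S₂'⟩ - heq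
    simp only [Prod.mk.injEq, Finset.map_inj] at heq
    obtain ⟨h1, rfl, rfl⟩ := heq
    rw [extendDomainHom_injective e h1]
  · rintro ⟨h, S₁, S₂⟩ hp
    rw [Finset.mem_filter] at hp
    obtain ⟨-, ⟨h1, h2⟩, ⟨h3, h4⟩, h5⟩ := hp
    simp only at h1 h2 h3 h4 h5
    have hS1 : S₁ ⊆ Finset.univ.map (emb e) := by
      rw [map_emb_univ, ← h5]; exact Finset.subset_union_left
    have hS2 : S₂ ⊆ Finset.univ.map (emb e) := by
      rw [map_emb_univ, ← h5]; exact Finset.subset_union_right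
    obtain ⟨h', rfl⟩ := ext_surj e h (h2.trans (by rw [← h5]; exact Finset.subset_union_left))
    obtain ⟨T₁, -, rfl⟩ := Finset.subset_map_iff.1 hS1
    obtain ⟨T₂, -, rfl⟩ := Finset.subset_map_iff.1 hS2
    refine ⟨(h', T₁, T₂), ?_, rfl⟩
    rw [Finset.mem_filter]
    refine ⟨Finset.mem_univ _, ⟨?_, ?_⟩, ⟨?_, ?_⟩, ?_⟩
    · simpa using h1
    · simpa only [supp_ext, Finset.map_subset_map] using h2
    · simpa using h3
    · simpa only [extendDomain_inv, extendDomain_mul, supp_ext, Finset.map_subset_map] using h4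
    · rw [← Finset.map_union] at h5
      exact Finset.map_injective (emb e) (h5.trans (map_emb_univ e).symm)
  · rintro ⟨h, S₁, S₂⟩ hp
    simp only [extendDomain_inv, extendDomain_mul, tp_ext]

end transport

lemma C_conj {n₁ n₂ : ℕ} (x : n₁.Partition → ℚ) (y : n₂.Partition → ℚ) {k : ℕ}
    (g g' : Perm (Fin k)) (h : ct g = ct g') :
    C x y k Finset.univ g = C x y k Finset.univ g' := by
  rw [ct_eq_iff] at h
  obtain ⟨c, hc⟩ := isConj_iff.1 h
  let e : Fin k ≃ {a // a ∈ (Finset.univ : Finset (Fin k))} :=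
    Equiv.trans c (Equiv.subtypeUnivEquiv (fun a => Finset.mem_univ a)).symm
  rw [← C_transport e x y g]
  congr 1
  rw [← hc]
  ext a
  rw [extendDomain_apply_subtype _ _ (Finset.mem_univ a)]
  simp [e]

/-- The partial product in degree `k`. -/
noncomputable def b {n₁ n₂ : ℕ} (x : n₁.Partition → ℚ) (y : n₂.Partition → ℚ) (k : ℕ) :
    k.Partition → ℚ :=
  fun Λ => C x y k Finset.univ (ct_surj Λ).choose

lemma b_ct {n₁ n₂ : ℕ} (x : n₁.Partition → ℚ) (y : n₂.Partition → ℚ) {k : ℕ}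
    (g : Perm (Fin k)) : b x y k (ct g) = C x y k Finset.univ g :=
  C_conj x y _ _ (ct_surj (ct g)).choose_spec

lemma C_eq_b {n₁ n₂ : ℕ} (x : n₁.Partition → ℚ) (y : n₂.Partition → ℚ) {m : ℕ}
    (S : Finset (Fin m)) (g : Perm (Fin m)) (h : g.support ⊆ S) :
    C x y m S g = X (b x y S.card) (tp S.card g) := by
  let e : Fin S.card ≃ {a // a ∈ S} := S.equivFin.symm
  obtain ⟨g', rfl⟩ := ext_surj e g h
  rw [C_transport, tp_ext, ← ct_parts, X_parts, b_ct]

lemma circ_rho_eq {n₁ n₂ : ℕ} (x : n₁.Partition → ℚ) (y : n₂.Partition → ℚ) (m : ℕ) :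
    circ (rhoTo m x) (rhoTo m y) =
      ∑ k ∈ Finset.Icc (max n₁ n₂) (n₁ + n₂), rhoTo m (b x y k) := by
  funext Λ
  obtain ⟨g, rfl⟩ := ct_surj Λ
  rw [circ_rho, Finset.sum_apply]
  simp only [rho_ct]
  rw [Finset.sum_comm]
  refine Finset.sum_congr rfl fun S _ => ?_
  by_cases h : S.card ∈ Finset.Icc (max n₁ n₂) (n₁ + n₂) ∧ g.support ⊆ S
  · rw [Finset.sum_eq_single_of_mem S.card h.1, if_pos ⟨rfl, h.2⟩, C_eq_b x y S g h.2]
    intro k _ hk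
    exact if_neg fun hh => hk hh.1.symm
  · rw [C_zero x y m S g h, Finset.sum_eq_zero]
    intro k hk
    refine if_neg fun hh => h ⟨?_, hh.2⟩
    rw [hh.1]; exact hk

lemma rho_self {n : ℕ} (x : n.Partition → ℚ) : rhoTo n x = x := by
  funext Λ
  unfold rhoTo
  simp only [le_refl, if_true, Nat.sub_self, Multiset.replicate_zero, add_zero,
    Nat.factorial_zero, Nat.cast_one, mul_one, ← Nat.Partition.ext_iff]
  rw [Finset.sum_ite_eq, if_pos (Finset.mem_univ _), div_self, one_mul]
  exact_mod_cast Nat.factorial_ne_zero _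

lemma rho_lt {n m : ℕ} (x : n.Partition → ℚ) (h : m < n) : rhoTo m x = 0 := by
  funext Λ
  unfold rhoTo
  rw [if_neg (by omega)]; rfl

lemma rho_add {n m : ℕ} (x y : n.Partition → ℚ) : rhoTo m (x + y) = rhoTo m x + rhoTo m y := by
  funext Λ
  unfold rhoTo
  simp only [Pi.add_apply]
  split_ifs
  · rw [← Finset.sum_add_distrib]
    refine Finset.sum_congr rfl fun Δ _ => ?_
    split_ifs <;> ring
  · simp

lemma rho_smul {n m : ℕ} (c : ℚ) (x : n.Partition → ℚ) : rhoTo m (c • x) = c • rhoTo m x := by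
  funext Λ
  unfold rhoTo
  simp only [Pi.smul_apply, smul_eq_mul]
  split_ifs
  · rw [Finset.mul_sum]
    refine Finset.sum_congr rfl fun Δ _ => ?_
    split_ifs <;> ring
  · simp

/-- `rhoTo` as a linear map. -/
noncomputable def rhoL (n m : ℕ) : (n.Partition → ℚ) →ₗ[ℚ] (m.Partition → ℚ) where
  toFun := rhoTo m
  map_add' := rho_add
  map_smul' := rho_smul

lemma circ_add_left {n : ℕ} (x x' y : n.Partition → ℚ) :
    circ (x + x') y = circ x y + circ x' y := by
  funext Λ
  obtain ⟨g, rfl⟩ := ct_surj Λ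
  simp only [Pi.add_apply, circ_ct, add_mul, Finset.sum_add_distrib]

lemma circ_smul_left {n : ℕ} (c : ℚ) (x y : n.Partition → ℚ) :
    circ (c • x) y = c • circ x y := by
  funext Λ
  obtain ⟨g, rfl⟩ := ct_surj Λ
  simp only [Pi.smul_apply, smul_eq_mul, circ_ct, Finset.mul_sum, mul_assoc]

/-- `circ` as a bilinear map. -/
noncomputable def circL (n : ℕ) :
    (n.Partition → ℚ) →ₗ[ℚ] (n.Partition → ℚ) →ₗ[ℚ] (n.Partition → ℚ) :=
  LinearMap.mk₂ ℚ circ circ_add_left circ_smul_left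
    (fun x y y' => by
      rw [circ_comm, circ_add_left, circ_comm y, circ_comm y'])
    (fun c x y => by rw [circ_comm, circ_smul_left, circ_comm y])

lemma bracket_eq {n₁ n₂ : ℕ} (Δ₁ : n₁.Partition) (Δ₂ : n₂.Partition) (n : ℕ)
    (hn : n ∈ Finset.Icc (max n₁ n₂) (n₁ + n₂)) :
    bracket Δ₁ Δ₂ n = b (diagC Δ₁) (diagC Δ₂) n := by
  induction n using Nat.strong_induction_on with
  | _ n ih =>
    rw [Finset.mem_Icc] at hn
    rw [bracket, if_pos hn, circ_rho_eq,
      Finset.sum_attach _ (fun k => rhoTo n (bracket Δ₁ Δ₂ k)), sub_eq_iff_eq_add]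
    have h1 : ∑ k ∈ Finset.Ico (max n₁ n₂) n, rhoTo n (bracket Δ₁ Δ₂ k) =
        ∑ k ∈ Finset.Ico (max n₁ n₂) n, rhoTo n (b (diagC Δ₁) (diagC Δ₂) k) := by
      refine Finset.sum_congr rfl fun k hk => ?_
      rw [Finset.mem_Ico] at hk
      rw [ih k hk.2 (Finset.mem_Icc.2 ⟨hk.1, by omega⟩)]
    have h2 : ∑ k ∈ Finset.Icc (max n₁ n₂) (n₁ + n₂), rhoTo n (b (diagC Δ₁) (diagC Δ₂) k) =
        ∑ k ∈ Finset.Ico (max n₁ n₂) (n + 1), rhoTo n (b (diagC Δ₁) (diagC Δ₂) k) := by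
      symm
      apply Finset.sum_subset
      · intro k hk
        rw [Finset.mem_Ico] at hk
        rw [Finset.mem_Icc]
        exact ⟨hk.1, by omega⟩
      · intro k hk hk'
        rw [Finset.mem_Icc] at hk
        rw [Finset.mem_Ico] at hk'
        apply rho_lt
        by_contra hlt
        exact hk' ⟨hk.1, by omega⟩
    rw [h1, h2, Finset.sum_Ico_succ_top hn.1, rho_self, add_comm]

/-- The total padding map `A_∞ → A_m`. -/
noncomputable def Phi (m : ℕ) : Ainf →ₗ[ℚ] (m.Partition → ℚ) :=
  DFinsupp.lsum ℚ (fun n => rhoL n m)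

lemma Phi_single (m n : ℕ) (x : n.Partition → ℚ) :
    Phi m (DFinsupp.single n x) = rhoTo m x := by
  unfold Phi
  rw [DFinsupp.lsum_single]; rfl

lemma Phi_eq (m : ℕ) (z : Ainf) : Phi m z = ∑ n ∈ z.support, rhoTo m (z n) := by
  conv_lhs => rw [← DFinsupp.sum_single (f := z)]
  unfold DFinsupp.sum
  rw [map_sum]
  simp only [Phi_single]

lemma Phi_inj {z w : Ainf} (h : ∀ m, Phi m z = Phi m w) : z = w := by
  rw [← sub_eq_zero]
  have h' : ∀ m, Phi m (z - w) = 0 := fun m => by rw [map_sub, h m, sub_self]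
  generalize z - w = v at h'
  ext1 n
  induction n using Nat.strong_induction_on with
  | _ n ih =>
    have h1 := h' n
    rw [Phi_eq] at h1
    by_contra hne
    rw [Finset.sum_eq_single_of_mem n (by rw [DFinsupp.mem_support_iff]; exact hne)] at h1
    · rw [rho_self] at h1; exact hne h1
    · intro k hk hkn
      rcases lt_or_gt_of_ne hkn with hlt | hgt
      · rw [ih k hlt]; exact map_zero (rhoL k n)
      · exact rho_lt _ hgt

lemma Phi_diagMul (m : ℕ) {n₁ n₂ : ℕ} (Δ₁ : n₁.Partition) (Δ₂ : n₂.Partition) :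
    Phi m (diagMul Δ₁ Δ₂) = circ (rhoTo m (diagC Δ₁)) (rhoTo m (diagC Δ₂)) := by
  unfold diagMul
  rw [map_sum, circ_rho_eq]
  refine Finset.sum_congr rfl fun k hk => ?_
  rw [Phi_single, bracket_eq Δ₁ Δ₂ k hk]

lemma diagC_sum {n : ℕ} (x : n.Partition → ℚ) : x = ∑ Δ, x Δ • diagC Δ := by
  funext Λ
  simp [diagC]

lemma Phi_mul (m : ℕ) (x y : Ainf) : Phi m (mulAinf x y) = circ (Phi m x) (Phi m y) := by
  have hx : ∀ {n : ℕ} (x : n.Partition → ℚ), rhoTo m x = ∑ Δ, x Δ • rhoTo m (diagC Δ) := by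
    intro n x
    conv_lhs => rw [diagC_sum x]
    change rhoL n m _ = _
    rw [map_sum]
    simp only [map_smul]; rfl
  rw [Phi_eq m x, Phi_eq m y]
  change _ = circL m _ _
  unfold mulAinf
  simp only [map_sum, map_smul, Phi_diagMul, LinearMap.sum_apply]
  rw [Finset.sum_comm]
  refine Finset.sum_congr rfl fun n₁ _ => Finset.sum_congr rfl fun n₂ _ => ?_
  rw [hx (x _), hx (y _)]
  simp only [map_sum, map_smul, LinearMap.sum_apply, LinearMap.smul_apply, Finset.smul_sum]
  first
  | refine Finset.sum_congr rfl fun Δ₁ _ => Finset.sum_congr rfl fun Δ₂ _ => ?_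
    rw [smul_smul]; first | rfl | (rw [mul_comm]; rfl)
  | rw [Finset.sum_comm]
    refine Finset.sum_congr rfl fun Δ₁ _ => Finset.sum_congr rfl fun Δ₂ _ => ?_
    rw [smul_smul]; first | rfl | (rw [mul_comm]; rfl)

end YD

theorem commutative_associative_algebra_of_Young_diagrams
    {n₁ n₂ n₃ : ℕ} (Δ₁ : Nat.Partition n₁) (Δ₂ : Nat.Partition n₂) (Δ₃ : Nat.Partition n₃) :
    mulAinf (ofDiag Δ₁) (ofDiag Δ₂) = mulAinf (ofDiag Δ₂) (ofDiag Δ₁) ∧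
    mulAinf (mulAinf (ofDiag Δ₁) (ofDiag Δ₂)) (ofDiag Δ₃) =
      mulAinf (ofDiag Δ₁) (mulAinf (ofDiag Δ₂) (ofDiag Δ₃)) := by
  refine ⟨YD.Phi_inj fun m => ?_, YD.Phi_inj fun m => ?_⟩
  · rw [YD.Phi_mul, YD.Phi_mul, YD.circ_comm]
  · simp only [YD.Phi_mul, YD.circ_assoc]
end

section
/- For Young diagrams Δ₁, Δ₂, Δ₃, define {Δ₁Δ₂Δ₃}_n ∈ A_n for max(|Δ₁|,|Δ₂|,|Δ₃|) ≤ n ≤ |Δ₁|+|Δ₂|+|Δ₃| by: {Δ₁Δ₂Δ₃}_n = ρ_{n−|Δ₁|}(Δ₁) ∘ ρ_{n−|Δ₂|}(Δ₂) ∘ ρ_{n−|Δ₃|}(Δ₃) for n = max(|Δ₁|,|Δ₂|,|Δ₃|), and {Δ₁Δ₂Δ₃}_n = ρ_{n−|Δ₁|}(Δ₁) ∘ ρ_{n−|Δ₂|}(Δ₂) ∘ ρ_{n−|Δ₃|}(Δ₃) − Σ_{k=max(|Δ₁|,|Δ₂|,|Δ₃|)}^{n−1} ρ_{n−k}({Δ₁Δ₂Δ₃}_k)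 for larger n. Then the triple product in the algebra A_∞° satisfies Δ₁·Δ₂·Δ₃ = Σ_{n=max(|Δ₁|,|Δ₂|,|Δ₃|)}^{|Δ₁|+|Δ₂|+|Δ₃|} {Δ₁Δ₂Δ₃}_n. -/
open scoped Classical

/-- The element `{Δ₁Δ₂Δ₃}_n ∈ A_n`, defined by the recursion
`{Δ₁Δ₂Δ₃}_n = ρ_{n−|Δ₁|}(Δ₁) ∘ ρ_{n−|Δ₂|}(Δ₂) ∘ ρ_{n−|Δ₃|}(Δ₃)
  − Σ_{k=max(|Δ₁|,|Δ₂|,|Δ₃|)}^{n−1} ρ_{n−k}({Δ₁Δ₂Δ₃}_k)`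
for `max(|Δ₁|,|Δ₂|,|Δ₃|) ≤ n ≤ |Δ₁|+|Δ₂|+|Δ₃|` (and `0` outside this range). -/
noncomputable def bracket3 {n₁ n₂ n₃ : ℕ} (Δ₁ : n₁.Partition) (Δ₂ : n₂.Partition)
    (Δ₃ : n₃.Partition) : (n : ℕ) → n.Partition → ℚ
  | n =>
    if max (max n₁ n₂) n₃ ≤ n ∧ n ≤ n₁ + n₂ + n₃ then
      circ (circ (rhoTo n (diagC Δ₁)) (rhoTo n (diagC Δ₂))) (rhoTo n (diagC Δ₃)) -
        ∑ k ∈ (Finset.Ico (max (max n₁ n₂) n₃) n).attach,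
          rhoTo n (bracket3 Δ₁ Δ₂ Δ₃ k.1)
    else 0
  termination_by n => n
  decreasing_by
    have := Finset.mem_Ico.mp k.2
    omega

/-- The partition of `n` given by the full cycle type. -/
noncomputable def ptype {n : ℕ} (g : Equiv.Perm (Fin n)) : n.Partition where
  parts := fullCycleType g
  parts_pos := by
    intro i hi
    rcases Multiset.mem_add.mp hi with h1 | h2
    · have := Equiv.Perm.two_le_of_mem_cycleType h1
      omega
    · simp [Multiset.eq_of_mem_replicate h2]
  parts_sum := by
    have h : g.cycleType.sum ≤ n := by
      rw [Equiv.Perm.sum_cycleType]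
      simpa using Finset.card_le_univ g.support
    simp [fullCycleType]
    omega

theorem count_one_cycleType {n : ℕ} (g : Equiv.Perm (Fin n)) : g.cycleType.count 1 = 0 := by
  rw [Multiset.count_eq_zero]
  intro h
  have := Equiv.Perm.two_le_of_mem_cycleType h
  omega

theorem sum_cycleType_le {n : ℕ} (g : Equiv.Perm (Fin n)) : g.cycleType.sum ≤ n := by
  rw [Equiv.Perm.sum_cycleType]
  simpa using Finset.card_le_univ g.support

theorem exists_ptype {n : ℕ} (p : n.Partition) : ∃ g : Equiv.Perm (Fin n), ptype g = p := by
  have hdec : p.parts = p.parts.filter (fun i => 2 ≤ i) + p.parts.filter (fun i => ¬ 2 ≤ i) :=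
    (Multiset.filter_add_not _ _).symm
  have h1 : p.parts.filter (fun i => ¬ 2 ≤ i) =
      Multiset.replicate (Multiset.card (p.parts.filter (fun i => ¬ 2 ≤ i))) 1 := by
    rw [Multiset.eq_replicate]
    refine ⟨rfl, ?_⟩
    intro b hb
    rw [Multiset.mem_filter] at hb
    have := p.parts_pos hb.1
    omega
  set c := Multiset.card (p.parts.filter (fun i => ¬ 2 ≤ i)) with hc
  rw [h1] at hdec
  have hs := p.parts_sum
  rw [hdec, Multiset.sum_add] at hs
  simp only [Multiset.sum_replicate, smul_eq_mul, mul_one] at hs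
  obtain ⟨g, hg⟩ := (Equiv.Perm.exists_with_cycleType_iff (Fin n)
      (m := p.parts.filter (fun i => 2 ≤ i))).mpr
    ⟨by simp only [Fintype.card_fin]; omega, fun a ha => (Multiset.mem_filter.mp ha).2⟩
  refine ⟨g, ?_⟩
  apply Nat.Partition.ext
  change g.cycleType + Multiset.replicate (n - g.cycleType.sum) 1 = p.parts
  rw [hg]
  refine Eq.trans ?_ hdec.symm
  congr 2
  omega

theorem cycleType_eq_of_ptype {n : ℕ} {g h : Equiv.Perm (Fin n)} (e : ptype g = ptype h) :
    g.cycleType = h.cycleType := by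
  have e1 : fullCycleType g = fullCycleType h := congrArg Nat.Partition.parts e
  have key : ∀ g : Equiv.Perm (Fin n), (fullCycleType g).filter (fun i => 2 ≤ i) = g.cycleType := by
    intro g
    rw [fullCycleType, Multiset.filter_add, Multiset.filter_eq_self.mpr, Multiset.filter_eq_nil.mpr]
    · simp
    · intro a ha
      rw [Multiset.eq_of_mem_replicate ha]
      omega
    · intro a ha
      exact Equiv.Perm.two_le_of_mem_cycleType ha
  rw [← key g, ← key h, e1]

theorem ptype_eq_iff {n : ℕ} {g h : Equiv.Perm (Fin n)} :
    ptype g = ptype h ↔ g.cycleType = h.cycleType := by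
  refine ⟨cycleType_eq_of_ptype, fun e => Nat.Partition.ext ?_⟩
  change fullCycleType g = fullCycleType h
  rw [fullCycleType, fullCycleType, e]

/-- Value of class function `x` on a permutation supported in a `k`-set, by cycle type. -/
noncomputable def cval {k : ℕ} (x : k.Partition → ℚ) (s : Multiset ℕ) : ℚ :=
  ∑ p : k.Partition, if p.parts = s + Multiset.replicate (k - s.sum) 1 then x p else 0

theorem cval_self {n : ℕ} (x : n.Partition → ℚ) (g : Equiv.Perm (Fin n)) :
    cval x g.cycleType = x (ptype g) := by
  unfold cval
  rw [Finset.sum_eq_single (ptype g)]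
  · rw [if_pos]; rfl
  · intro p _ hp
    rw [if_neg]
    intro h
    exact hp (Nat.Partition.ext h)
  · simp

theorem ext_ptype {n : ℕ} {x y : n.Partition → ℚ} (h : ∀ g, x (ptype g) = y (ptype g)) :
    x = y := by
  funext p
  obtain ⟨g, rfl⟩ := exists_ptype p
  exact h g

theorem embedCenter_eq {n : ℕ} (x : n.Partition → ℚ) :
    embedCenter x = ∑ g, MonoidAlgebra.single g (x (ptype g)) := by
  unfold embedCenter classSum
  simp_rw [Finset.smul_sum, Finset.sum_filter]
  rw [Finset.sum_comm]
  refine Finset.sum_congr rfl fun g _ => ?_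
  rw [Finset.sum_eq_single (ptype g)]
  · rw [if_pos (by rfl)]
    simp
  · intro p _ hp
    rw [if_neg]
    intro h
    exact hp (Nat.Partition.ext h.symm)
  · simp

theorem coeff_mul_embed {n : ℕ} (x y : n.Partition → ℚ) (g : Equiv.Perm (Fin n)) :
    (embedCenter x * embedCenter y).coeff g =
      ∑ a, ∑ b, if a * b = g then x (ptype a) * y (ptype b) else 0 := by
  rw [embedCenter_eq, embedCenter_eq, Finset.sum_mul_sum]
  simp only [MonoidAlgebra.single_mul_single, MonoidAlgebra.coeff_sum, Finsupp.coe_finsetSum,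
    Finset.sum_apply, MonoidAlgebra.coeff_single, Finsupp.single_apply]

theorem conv_conj {n : ℕ} (x y : n.Partition → ℚ) (g c : Equiv.Perm (Fin n)) :
    (∑ a, ∑ b, if a * b = c * g * c⁻¹ then x (ptype a) * y (ptype b) else 0) =
      ∑ a, ∑ b, if a * b = g then x (ptype a) * y (ptype b) else 0 := by
  have hp : ∀ a : Equiv.Perm (Fin n), ptype (c * a * c⁻¹) = ptype a := fun a =>
    ptype_eq_iff.mpr Equiv.Perm.cycleType_conj
  rw [← Equiv.sum_comp (MulAut.conj c).toEquiv]
  refine Finset.sum_congr rfl fun a _ => ?_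
  rw [← Equiv.sum_comp (MulAut.conj c).toEquiv]
  refine Finset.sum_congr rfl fun b _ => ?_
  simp only [MulEquiv.toEquiv_eq_coe, MulEquiv.coe_toEquiv, MulAut.conj_apply, hp]
  congr 1
  apply propext
  constructor
  · intro h
    have : c * (a * b) * c⁻¹ = c * g * c⁻¹ := by rw [← h]; group
    simpa using this
  · rintro rfl
    group

theorem circ_ptype {n : ℕ} (x y : n.Partition → ℚ) (g : Equiv.Perm (Fin n)) :
    circ x y (ptype g) = ∑ a, ∑ b, if a * b = g then x (ptype a) * y (ptype b) else 0 := by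
  unfold circ classCoeff
  have h : ∀ g' ∈ Finset.univ.filter (fun g' => fullCycleType g' = (ptype g).parts),
      (embedCenter x * embedCenter y).coeff g' =
        ∑ a, ∑ b, if a * b = g then x (ptype a) * y (ptype b) else 0 := by
    intro g' hg'
    rw [coeff_mul_embed]
    have h1 : ptype g = ptype g' := Nat.Partition.ext (Finset.mem_filter.mp hg').2.symm
    have h2 := Equiv.Perm.isConj_iff_cycleType_eq.mpr (ptype_eq_iff.mp h1)
    obtain ⟨c, hc⟩ := isConj_iff.mp h2
    rw [← hc, conv_conj]
  rw [Finset.sum_congr rfl h, Finset.sum_const, nsmul_eq_mul]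
  rw [mul_div_assoc, mul_div_cancel₀]
  have : g ∈ Finset.univ.filter (fun g' => fullCycleType g' = (ptype g).parts) :=
    Finset.mem_filter.mpr ⟨Finset.mem_univ _, rfl⟩
  have := Finset.card_pos.mpr ⟨g, this⟩
  positivity

theorem card_supersets {n : ℕ} (s : Finset (Fin n)) (m : ℕ) (h : m ≤ n) :
    (Finset.univ.filter (fun D : Finset (Fin n) => D.card = m ∧ s ⊆ D)).card =
      (n - s.card).choose (n - m) := by
  have hc : (sᶜ).card = n - s.card := by rw [Finset.card_compl, Fintype.card_fin]
  rw [← hc, ← Finset.card_powersetCard]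
  refine Finset.card_nbij' (fun D => Dᶜ) (fun D => Dᶜ) ?_ ?_ ?_ ?_
  · intro D hD
    simp only [Finset.coe_filter, Finset.mem_univ, true_and, Set.mem_ofPred_eq] at hD
    simp only [Finset.mem_coe, Finset.mem_powersetCard, Finset.card_compl, Fintype.card_fin,
      Finset.compl_subset_compl]
    exact ⟨hD.2, by rw [hD.1]⟩
  · intro D hD
    simp only [Finset.mem_coe, Finset.mem_powersetCard] at hD
    simp only [Finset.coe_filter, Finset.mem_univ, true_and, Set.mem_ofPred_eq,
      Finset.card_compl, Fintype.card_fin]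
    refine ⟨by omega, ?_⟩
    rw [Finset.subset_compl_comm]
    exact hD.1
  · intro D _; simp
  · intro D _; simp

theorem rhoTo_ptype {m : ℕ} (n : ℕ) (x : m.Partition → ℚ) (g : Equiv.Perm (Fin n)) :
    rhoTo n x (ptype g) =
      ∑ D : Finset (Fin n), if D.card = m ∧ g.support ⊆ D then cval x g.cycleType else 0 := by
  rw [← Finset.sum_filter, Finset.sum_const]
  unfold rhoTo
  split_ifs with h
  · rw [card_supersets _ _ h, cval, nsmul_eq_mul, Finset.mul_sum]
    refine Finset.sum_congr rfl fun p _ => ?_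
    have hs := Equiv.Perm.sum_cycleType g
    have hle := sum_cycleType_le g
    have h1 := count_one_cycleType g
    by_cases hp : p.parts = g.cycleType + Multiset.replicate (m - g.cycleType.sum) 1
    · have hsum := p.parts_sum
      rw [hp] at hsum
      simp only [Multiset.sum_add, Multiset.sum_replicate, smul_eq_mul, mul_one] at hsum
      have hcount : p.parts.count 1 = m - g.cycleType.sum := by
        rw [hp]; simp [h1]
      rw [if_pos hp, if_pos]
      · rw [hcount, ← hs]
        have e1 : m - g.cycleType.sum + (n - m) = n - g.cycleType.sum := by omega
        rw [Nat.cast_choose ℚ (show n - m ≤ n - g.cycleType.sum by omega), e1]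
        have e2 : n - g.cycleType.sum - (n - m) = m - g.cycleType.sum := by omega
        rw [e2, mul_comm ((n - m).factorial : ℚ)]
      · change g.cycleType + Multiset.replicate (n - g.cycleType.sum) 1 = _
        rw [hp, add_assoc, ← Multiset.replicate_add]
        congr 2
        omega
    · rw [if_neg hp, if_neg, mul_zero]
      intro h2
      apply hp
      change g.cycleType + Multiset.replicate (n - g.cycleType.sum) 1 = _ at h2
      have h3 := congrArg (Multiset.count 1) h2
      simp only [Multiset.count_add, h1, Multiset.count_replicate_self] at h3
      have e : n - g.cycleType.sum = (m - g.cycleType.sum) + (n - m) := by omega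
      rw [e, Multiset.replicate_add, ← add_assoc] at h2
      exact (add_right_cancel h2).symm
  · rw [Finset.filter_false_of_mem]
    · simp
    · intro D _ hD
      have := Finset.card_le_univ D
      simp at this
      omega

theorem rhoTo_self {n : ℕ} (x : n.Partition → ℚ) : rhoTo n x = x := by
  apply ext_ptype
  intro g
  rw [rhoTo_ptype, cval_self, Finset.sum_eq_single Finset.univ]
  · simp
  · intro D _ hD
    rw [if_neg]
    rintro ⟨h, _⟩
    apply hD
    rw [← Finset.card_eq_iff_eq_univ]
    simpa using h
  · simp

theorem rhoTo_of_lt {m n : ℕ} (h : n < m) (x : m.Partition → ℚ) : rhoTo n x = 0 := by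
  funext p
  simp [rhoTo, h]

theorem rhoTo_add {m : ℕ} (n : ℕ) (x y : m.Partition → ℚ) :
    rhoTo n (x + y) = rhoTo n x + rhoTo n y := by
  funext p
  simp only [rhoTo, Pi.add_apply]
  split_ifs
  · rw [← Finset.sum_add_distrib]
    refine Finset.sum_congr rfl fun _ _ => ?_
    split_ifs <;> ring
  · simp

theorem rhoTo_smul {m : ℕ} (n : ℕ) (c : ℚ) (x : m.Partition → ℚ) :
    rhoTo n (c • x) = c • rhoTo n x := by
  funext p
  simp only [rhoTo, Pi.smul_apply, smul_eq_mul]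
  split_ifs
  · rw [Finset.mul_sum]
    refine Finset.sum_congr rfl fun _ _ => ?_
    split_ifs <;> ring
  · simp

/-- `rhoTo` as a linear map. -/
noncomputable def rhoL (m n : ℕ) : (m.Partition → ℚ) →ₗ[ℚ] (n.Partition → ℚ) where
  toFun := rhoTo n
  map_add' := rhoTo_add n
  map_smul' := rhoTo_smul n

/-- `circ` in its first argument as a linear map. -/
noncomputable def circL {n : ℕ} (y : n.Partition → ℚ) :
    (n.Partition → ℚ) →ₗ[ℚ] (n.Partition → ℚ) where
  toFun x := circ x y
  map_add' x x' := by
    apply ext_ptype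
    intro g
    simp only [Pi.add_apply, circ_ptype, ← Finset.sum_add_distrib]
    refine Finset.sum_congr rfl fun _ _ => Finset.sum_congr rfl fun _ _ => ?_
    split_ifs <;> ring
  map_smul' c x := by
    apply ext_ptype
    intro g
    simp only [Pi.smul_apply, smul_eq_mul, RingHom.id_apply, circ_ptype, Finset.mul_sum]
    refine Finset.sum_congr rfl fun _ _ => Finset.sum_congr rfl fun _ _ => ?_
    split_ifs <;> ring

/-- Extension of a permutation along an embedding. -/
noncomputable def viaE {k n : ℕ} (e : Fin k ↪ Fin n) (a : Equiv.Perm (Fin k)) :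
    Equiv.Perm (Fin n) := a.viaFintypeEmbedding e

theorem viaE_mul {k n : ℕ} (e : Fin k ↪ Fin n) (a b : Equiv.Perm (Fin k)) :
    viaE e (a * b) = viaE e a * viaE e b :=
  (Equiv.Perm.extendDomain_mul _ a b).symm

theorem viaE_apply {k n : ℕ} (e : Fin k ↪ Fin n) (a : Equiv.Perm (Fin k)) (i : Fin k) :
    viaE e a (e i) = e (a i) := Equiv.Perm.viaFintypeEmbedding_apply_image a e i

theorem viaE_injective {k n : ℕ} (e : Fin k ↪ Fin n) : Function.Injective (viaE e) := by
  intro a b h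
  ext i
  have := congrArg (fun f => f (e i)) h
  simp only [viaE_apply] at this
  rw [e.injective this]

theorem viaE_cycleType {k n : ℕ} (e : Fin k ↪ Fin n) (a : Equiv.Perm (Fin k)) :
    (viaE e a).cycleType = a.cycleType := by
  unfold viaE Equiv.Perm.viaFintypeEmbedding
  convert Equiv.Perm.cycleType_extendDomain _

theorem viaE_support {k n : ℕ} (e : Fin k ↪ Fin n) (a : Equiv.Perm (Fin k)) :
    (viaE e a).support = a.support.map e := by
  ext j
  by_cases hj : j ∈ Set.range e
  · obtain ⟨i, rfl⟩ := hj
    rw [Equiv.Perm.mem_support, viaE_apply, Finset.mem_map' e, Equiv.Perm.mem_support]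
    simp
  · have h1 : viaE e a j = j := Equiv.Perm.viaFintypeEmbedding_apply_notMem_range a e hj
    rw [Equiv.Perm.mem_support, Finset.mem_map]
    constructor
    · intro h; exact absurd h1 h
    · rintro ⟨i, _, rfl⟩
      exact absurd ⟨i, rfl⟩ hj

theorem viaE_surj {k n : ℕ} (e : Fin k ↪ Fin n) (a : Equiv.Perm (Fin n))
    (h : a.support ⊆ Finset.univ.map e) : ∃ b, viaE e b = a := by
  have hmem : ∀ x, a x ≠ x → x ∈ Set.range e := by
    intro x hx
    have := h (Equiv.Perm.mem_support.mpr hx)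
    simpa using this
  have h1 : ∀ x, a x ∈ Set.range e ↔ x ∈ Set.range e := by
    intro x
    by_cases hx : a x = x
    · rw [hx]
    · refine iff_of_true (hmem _ ?_) (hmem _ hx)
      intro h2
      exact hx (a.injective h2)
  refine ⟨e.toEquivRange.symm.permCongr (a.subtypePerm h1), ?_⟩
  ext j
  by_cases hj : j ∈ Set.range e
  · obtain ⟨i, rfl⟩ := hj
    rw [viaE_apply]
    congr 1
    have : ∀ y : Set.range e, e (e.toEquivRange.symm y) = y := by
      rintro ⟨_, i, rfl⟩
      simp
    rw [Equiv.permCongr_apply, this]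
    simp
  · have h1 : viaE e (e.toEquivRange.symm.permCongr (a.subtypePerm h1)) j = j :=
      Equiv.Perm.viaFintypeEmbedding_apply_notMem_range _ e hj
    rw [h1]
    by_contra h2
    exact hj (hmem j fun h3 => h2 (by rw [h3]))

/-- Index set: pairs of partial permutations whose product is `g` with domain `S`. -/
def IsPair (n₁ n₂ : ℕ) {n : ℕ} (g : Equiv.Perm (Fin n))
    (t : (Finset (Fin n) × Finset (Fin n)) × (Equiv.Perm (Fin n) × Equiv.Perm (Fin n))) : Prop :=
  (t.1.1.card = n₁ ∧ t.2.1.support ⊆ t.1.1) ∧ (t.1.2.card = n₂ ∧ t.2.2.support ⊆ t.1.2) ∧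
    t.2.1 * t.2.2 = g

/-- Sum over pairs of partial permutations with total domain `S` and product `g`. -/
noncomputable def QS (n₁ n₂ : ℕ) (f h : Multiset ℕ → ℚ) {n : ℕ} (S : Finset (Fin n))
    (g : Equiv.Perm (Fin n)) : ℚ :=
  ∑ t ∈ Finset.univ.filter (fun t => IsPair n₁ n₂ g t ∧ t.1.1 ∪ t.1.2 = S),
    f t.2.1.cycleType * h t.2.2.cycleType

theorem QS_transport (n₁ n₂ : ℕ) (f h : Multiset ℕ → ℚ) {k n : ℕ} (e : Fin k ↪ Fin n)
    (g : Equiv.Perm (Fin k)) :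
    QS n₁ n₂ f h Finset.univ g = QS n₁ n₂ f h (Finset.univ.map e) (viaE e g) := by
  unfold QS
  refine Finset.sum_bij
    (fun t _ => ((t.1.1.map e, t.1.2.map e), (viaE e t.2.1, viaE e t.2.2))) ?_ ?_ ?_ ?_
  · rintro ⟨⟨D₁, D₂⟩, ⟨a, b⟩⟩ ht
    replace ht := (Finset.mem_filter.mp ht).2
    refine Finset.mem_filter.mpr ⟨Finset.mem_univ _, ?_⟩
    simp only [IsPair] at ht ⊢
    obtain ⟨⟨⟨h1, h2⟩, ⟨h3, h4⟩, h5⟩, h6⟩ := ht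
    simp only [viaE_support, Finset.card_map, Finset.map_subset_map, ← viaE_mul,
      ← Finset.map_union]
    exact ⟨⟨⟨h1, h2⟩, ⟨h3, h4⟩, by rw [h5]⟩, by rw [h6]⟩
  · rintro ⟨⟨D₁, D₂⟩, ⟨a, b⟩⟩ _ ⟨⟨E₁, E₂⟩, ⟨c, d⟩⟩ _ heq
    simp only [Prod.mk.injEq, Finset.map_inj, (viaE_injective e).eq_iff] at heq ⊢
    exact heq
  · rintro ⟨⟨D₁, D₂⟩, ⟨a, b⟩⟩ ht
    replace ht := (Finset.mem_filter.mp ht).2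
    simp only [IsPair] at ht
    obtain ⟨⟨⟨h1, h2⟩, ⟨h3, h4⟩, h5⟩, h6⟩ := ht
    have s1 : D₁ ⊆ Finset.univ.map e := h6 ▸ Finset.subset_union_left
    have s2 : D₂ ⊆ Finset.univ.map e := h6 ▸ Finset.subset_union_right
    obtain ⟨a, rfl⟩ := viaE_surj e a (h2.trans s1)
    obtain ⟨b, rfl⟩ := viaE_surj e b (h4.trans s2)
    obtain ⟨D₁, _, rfl⟩ := Finset.subset_map_iff.mp s1
    obtain ⟨D₂, _, rfl⟩ := Finset.subset_map_iff.mp s2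
    refine ⟨((D₁, D₂), (a, b)), ?_, rfl⟩
    simp only [viaE_support, Finset.card_map, Finset.map_subset_map, ← viaE_mul,
      ← Finset.map_union, (viaE_injective e).eq_iff, Finset.map_inj] at h1 h2 h3 h4 h5 h6
    refine Finset.mem_filter.mpr ⟨Finset.mem_univ _, ?_⟩
    simp only [IsPair]
    exact ⟨⟨⟨h1, h2⟩, ⟨h3, h4⟩, h5⟩, h6⟩
  · rintro ⟨⟨D₁, D₂⟩, ⟨a, b⟩⟩ _
    simp only [viaE_cycleType]

theorem QS_conj (n₁ n₂ : ℕ) (f h : Multiset ℕ → ℚ) {k : ℕ} {g g' : Equiv.Perm (Fin k)}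
    (hg : ptype g = ptype g') :
    QS n₁ n₂ f h Finset.univ g = QS n₁ n₂ f h Finset.univ g' := by
  obtain ⟨c, hc⟩ := isConj_iff.mp
    (Equiv.Perm.isConj_iff_cycleType_eq.mpr (ptype_eq_iff.mp hg))
  rw [QS_transport n₁ n₂ f h c.toEmbedding g, Finset.map_univ_equiv]
  congr 1
  rw [← hc]
  ext i
  obtain ⟨j, rfl⟩ := c.surjective i
  have := viaE_apply c.toEmbedding g j
  simp only [Equiv.coe_toEmbedding] at this
  rw [this]
  simp

/-- The structure constants: `{Δ₁Δ₂}_k` in closed form. -/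
noncomputable def cc (n₁ n₂ : ℕ) (f h : Multiset ℕ → ℚ) (k : ℕ) : k.Partition → ℚ :=
  fun p => QS n₁ n₂ f h Finset.univ (exists_ptype p).choose

theorem cc_ptype (n₁ n₂ : ℕ) (f h : Multiset ℕ → ℚ) {k : ℕ} (g : Equiv.Perm (Fin k)) :
    cc n₁ n₂ f h k (ptype g) = QS n₁ n₂ f h Finset.univ g :=
  QS_conj _ _ _ _ (exists_ptype (ptype g)).choose_spec

theorem QS_eq (n₁ n₂ : ℕ) (f h : Multiset ℕ → ℚ) {n : ℕ} (S : Finset (Fin n))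
    (g : Equiv.Perm (Fin n)) (hS : g.support ⊆ S) :
    QS n₁ n₂ f h S g = cval (cc n₁ n₂ f h S.card) g.cycleType := by
  have hm : Finset.univ.map (S.orderEmbOfFin rfl).toEmbedding = S := by
    simp
  obtain ⟨b, hb⟩ := viaE_surj (S.orderEmbOfFin rfl).toEmbedding g (by rwa [hm])
  rw [← hb, viaE_cycleType, cval_self, cc_ptype,
    QS_transport n₁ n₂ f h (S.orderEmbOfFin rfl).toEmbedding b, hm]

theorem QS_zero (n₁ n₂ : ℕ) (f h : Multiset ℕ → ℚ) {n : ℕ} (S : Finset (Fin n))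
    (g : Equiv.Perm (Fin n))
    (hS : ¬ (g.support ⊆ S ∧ n₁ ≤ S.card ∧ n₂ ≤ S.card ∧ S.card ≤ n₁ + n₂)) :
    QS n₁ n₂ f h S g = 0 := by
  unfold QS
  rw [Finset.filter_false_of_mem]
  · simp
  · rintro ⟨⟨D₁, D₂⟩, ⟨a, b⟩⟩ _ ⟨⟨⟨h1, h2⟩, ⟨h3, h4⟩, h5⟩, h6⟩
    simp only at h1 h2 h3 h4 h5 h6
    apply hS
    subst h6 h5 h1 h3
    refine ⟨?_, Finset.card_le_card Finset.subset_union_left,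
      Finset.card_le_card Finset.subset_union_right, Finset.card_union_le _ _⟩
    refine (Equiv.Perm.support_mul_le a b).trans ?_
    exact Finset.union_subset_union h2 h4

theorem cc_zero (n₁ n₂ : ℕ) (f h : Multiset ℕ → ℚ) (k : ℕ)
    (hk : ¬ (n₁ ≤ k ∧ n₂ ≤ k ∧ k ≤ n₁ + n₂)) : cc n₁ n₂ f h k = 0 := by
  apply ext_ptype
  intro g
  rw [cc_ptype, QS_zero]
  · rfl
  · simpa using hk

theorem circ_rho {n₁ n₂ : ℕ} (x : n₁.Partition → ℚ) (y : n₂.Partition → ℚ) (n M : ℕ)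
    (hM : n < M) :
    circ (rhoTo n x) (rhoTo n y) =
      ∑ k ∈ Finset.range M, rhoTo n (cc n₁ n₂ (cval x) (cval y) k) := by
  apply ext_ptype
  intro g
  rw [circ_ptype, Finset.sum_apply]
  simp only [rhoTo_ptype]
  rw [Finset.sum_comm (s := Finset.range M)]
  have hR : ∀ S : Finset (Fin n), (∑ k ∈ Finset.range M,
      if S.card = k ∧ g.support ⊆ S then
        cval (cc n₁ n₂ (cval x) (cval y) k) g.cycleType else 0) =
      QS n₁ n₂ (cval x) (cval y) S g := by
    intro S
    have hc : S.card ≤ n := by simpa using Finset.card_le_univ S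
    rw [Finset.sum_eq_single S.card]
    · by_cases hS : g.support ⊆ S
      · rw [if_pos ⟨rfl, hS⟩, QS_eq _ _ _ _ _ _ hS]
      · rw [if_neg (fun h => hS h.2), QS_zero _ _ _ _ _ _ (fun h => hS h.1)]
    · intro k _ hk
      rw [if_neg (fun h => hk h.1.symm)]
    · intro h
      exact absurd (Finset.mem_range.mpr (by omega)) h
  simp only [hR, QS]
  have hfib : (∑ S : Finset (Fin n),
      ∑ t ∈ Finset.univ.filter (fun t => IsPair n₁ n₂ g t ∧ t.1.1 ∪ t.1.2 = S),
        cval x t.2.1.cycleType * cval y t.2.2.cycleType) =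
      ∑ t ∈ Finset.univ.filter (fun t => IsPair n₁ n₂ g t),
        cval x t.2.1.cycleType * cval y t.2.2.cycleType := by
    rw [← Finset.sum_fiberwise (Finset.univ.filter (fun t => IsPair n₁ n₂ g t))
      (fun t => t.1.1 ∪ t.1.2)]
    refine Finset.sum_congr rfl fun S _ => ?_
    rw [Finset.filter_filter]
  rw [hfib, Finset.sum_filter, Fintype.sum_prod_type_right, Fintype.sum_prod_type]
  refine Finset.sum_congr rfl fun a _ => Finset.sum_congr rfl fun b _ => ?_
  rw [Fintype.sum_prod_type, Finset.sum_mul_sum]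
  by_cases hab : a * b = g
  · rw [if_pos hab]
    refine Finset.sum_congr rfl fun D₁ _ => Finset.sum_congr rfl fun D₂ _ => ?_
    simp only [IsPair, hab, and_true]
    by_cases h1 : D₁.card = n₁ ∧ a.support ⊆ D₁
    · by_cases h2 : D₂.card = n₂ ∧ b.support ⊆ D₂
      · rw [if_pos h1, if_pos h2, if_pos ⟨h1, h2⟩]
      · rw [if_neg h2, mul_zero, if_neg]
        exact fun h => h2 h.2
    · rw [if_neg h1, zero_mul, if_neg]
      exact fun h => h1 h.1
  · rw [if_neg hab]
    symm
    refine Finset.sum_eq_zero fun D₁ _ => Finset.sum_eq_zero fun D₂ _ => ?_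
    rw [if_neg (fun h => hab h.2.2)]

/-- The structure constants of two diagrams. -/
noncomputable def ccd {n₁ n₂ : ℕ} (Δ₁ : n₁.Partition) (Δ₂ : n₂.Partition) (k : ℕ) :
    k.Partition → ℚ :=
  cc n₁ n₂ (cval (diagC Δ₁)) (cval (diagC Δ₂)) k

theorem rhoTo_zero {m : ℕ} (n : ℕ) : rhoTo n (0 : m.Partition → ℚ) = 0 := (rhoL m n).map_zero

theorem bracket_eq {n₁ n₂ : ℕ} (Δ₁ : n₁.Partition) (Δ₂ : n₂.Partition) (n : ℕ) :
    bracket Δ₁ Δ₂ n = ccd Δ₁ Δ₂ n := by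
  induction n using Nat.strong_induction_on with
  | _ n ih =>
    rw [bracket]
    split_ifs with h
    · rw [Finset.sum_attach (Finset.Ico (max n₁ n₂) n) (fun k => rhoTo n (bracket Δ₁ Δ₂ k)),
        circ_rho _ _ n (n + 1) (by omega), Finset.sum_range_succ, rhoTo_self]
      have : ∑ k ∈ Finset.Ico (max n₁ n₂) n, rhoTo n (bracket Δ₁ Δ₂ k) =
          ∑ k ∈ Finset.range n, rhoTo n (ccd Δ₁ Δ₂ k) := by
        rw [Finset.sum_congr rfl (fun k hk => by rw [ih k (Finset.mem_Ico.mp hk).2])]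
        apply Finset.sum_subset
        · intro k hk
          exact Finset.mem_range.mpr (Finset.mem_Ico.mp hk).2
        · intro k hk hk'
          rw [Finset.mem_range] at hk
          rw [Finset.mem_Ico] at hk'
          rw [ccd, cc_zero, rhoTo_zero]
          omega
      rw [this]
      unfold ccd
      abel
    · rw [ccd, cc_zero]
      omega

theorem sum_single_apply' (s : Finset ℕ) (f : (n : ℕ) → n.Partition → ℚ) (k : ℕ)
    (h : k ∉ s → f k = 0) :
    (∑ n ∈ s, (DFinsupp.single n (f n) : Ainf)) k = f k := by
  rw [DFinsupp.finsetSum_apply]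
  by_cases hk : k ∈ s
  · rw [Finset.sum_eq_single k]
    · simp
    · intro b _ hb
      rw [DFinsupp.single_apply, dif_neg hb]
    · intro h; exact absurd hk h
  · rw [h hk]
    refine Finset.sum_eq_zero fun b hb => ?_
    rw [DFinsupp.single_apply, dif_neg]
    rintro rfl
    exact hk hb

theorem diagMul_apply {n₁ n₂ : ℕ} (Δ₁ : n₁.Partition) (Δ₂ : n₂.Partition) (k : ℕ) :
    diagMul Δ₁ Δ₂ k = ccd Δ₁ Δ₂ k := by
  unfold diagMul
  rw [sum_single_apply', bracket_eq]
  intro hk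
  rw [Finset.mem_Icc] at hk
  rw [bracket_eq, ccd, cc_zero]
  omega

theorem diagC_ne_zero {n : ℕ} (Δ : n.Partition) : diagC Δ ≠ 0 := by
  intro h
  have := congrFun h Δ
  simp [diagC] at this

theorem mul_ofDiag {n₃ : ℕ} (x : Ainf) (Δ₃ : n₃.Partition) (M : ℕ) (hM : ∀ k, M ≤ k → x k = 0) :
    mulAinf x (ofDiag Δ₃) =
      ∑ k ∈ Finset.range M, ∑ p : Nat.Partition k, x k p • diagMul p Δ₃ := by
  unfold mulAinf
  have h1 : (ofDiag Δ₃).support = {n₃} := DFinsupp.support_single_ne_zero (diagC_ne_zero Δ₃)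
  have h2 : ofDiag Δ₃ n₃ = diagC Δ₃ := DFinsupp.single_eq_same
  simp only [h1, Finset.sum_singleton, h2]
  have h3 : ∀ (k : ℕ) (p : k.Partition),
      (∑ q : n₃.Partition, (x k p * diagC Δ₃ q) • diagMul p q) = x k p • diagMul p Δ₃ := by
    intro k p
    rw [Finset.sum_eq_single Δ₃]
    · simp [diagC]
    · intro q _ hq
      simp [diagC, hq]
    · simp
  simp only [h3]
  apply Finset.sum_subset
  · intro k hk
    rw [Finset.mem_range]
    by_contra h
    exact (DFinsupp.mem_support_iff.mp hk) (hM k (by omega))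
  · intro k _ hk
    rw [DFinsupp.notMem_support_iff] at hk
    refine Finset.sum_eq_zero fun p _ => ?_
    rw [hk, Pi.zero_apply]
    ext i q
    rw [DFinsupp.smul_apply, Pi.smul_apply, zero_smul]
    rfl

theorem ofDiag_mul {n₁ n₂ : ℕ} (Δ₁ : n₁.Partition) (Δ₂ : n₂.Partition) :
    mulAinf (ofDiag Δ₁) (ofDiag Δ₂) = diagMul Δ₁ Δ₂ := by
  have h2 : ofDiag Δ₁ n₁ = diagC Δ₁ := DFinsupp.single_eq_same
  have h0 : ∀ k, k ≠ n₁ → ofDiag Δ₁ k = 0 := by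
    intro k hk
    rw [ofDiag, DFinsupp.single_apply, dif_neg (Ne.symm hk)]
  rw [mul_ofDiag _ _ (n₁ + 1) (fun k hk => h0 k (by omega)), Finset.sum_eq_single n₁]
  · rw [Finset.sum_eq_single Δ₁]
    · simp [h2, diagC]
    · intro q _ hq
      simp [h2, diagC, hq]
    · simp
  · intro k _ hk
    refine Finset.sum_eq_zero fun p _ => ?_
    rw [h0 k hk, Pi.zero_apply]
    ext i q
    rw [DFinsupp.smul_apply, Pi.smul_apply, zero_smul]
    rfl
  · simp

/-- The map `A_∞° → A_n`. -/
noncomputable def Phi (n : ℕ) : Ainf →ₗ[ℚ] (n.Partition → ℚ) :=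
  ∑ k ∈ Finset.range (n + 1), (rhoL k n).comp (DFinsupp.lapply k)

theorem Phi_apply (n : ℕ) (x : Ainf) :
    Phi n x = ∑ k ∈ Finset.range (n + 1), rhoTo n (x k) := by
  simp only [Phi, LinearMap.sum_apply]
  rfl

theorem Phi_diagMul {n₁ n₂ : ℕ} (Δ₁ : n₁.Partition) (Δ₂ : n₂.Partition) (n : ℕ) :
    Phi n (diagMul Δ₁ Δ₂) = circ (rhoTo n (diagC Δ₁)) (rhoTo n (diagC Δ₂)) := by
  rw [Phi_apply, circ_rho _ _ n (n + 1) (by omega)]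
  simp only [diagMul_apply]
  rfl

theorem sum_diagC {k : ℕ} (x : k.Partition → ℚ) : ∑ p, x p • diagC p = x := by
  funext q
  simp [diagC]

theorem Phi_mul {n₃ : ℕ} (x : Ainf) (Δ₃ : n₃.Partition) (M : ℕ) (hM : ∀ k, M ≤ k → x k = 0)
    (n : ℕ) : Phi n (mulAinf x (ofDiag Δ₃)) = circ (Phi n x) (rhoTo n (diagC Δ₃)) := by
  have hx : Phi n x = ∑ k ∈ Finset.range M, rhoTo n (x k) := by
    rw [Phi_apply]
    have e1 : ∑ k ∈ Finset.range (n + 1), rhoTo n (x k) =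
        ∑ k ∈ Finset.range (n + 1 + M), rhoTo n (x k) := by
      apply Finset.sum_subset
      · intro k hk
        rw [Finset.mem_range] at *
        omega
      · intro k _ hk
        rw [Finset.mem_range] at hk
        exact rhoTo_of_lt (by omega) _
    rw [e1]
    symm
    apply Finset.sum_subset
    · intro k hk
      rw [Finset.mem_range] at *
      omega
    · intro k _ hk
      rw [Finset.mem_range] at hk
      rw [hM k (by omega), rhoTo_zero]
  rw [mul_ofDiag x Δ₃ M hM, hx]
  change _ = circL (rhoTo n (diagC Δ₃)) _
  rw [map_sum, map_sum]
  refine Finset.sum_congr rfl fun k _ => ?_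
  have e2 : rhoTo n (x k) = ∑ p, x k p • rhoTo n (diagC p) := by
    conv_lhs => rw [← sum_diagC (x k)]
    change rhoL k n _ = _
    rw [map_sum]
    refine Finset.sum_congr rfl fun p _ => ?_
    rw [map_smul]
    rfl
  rw [e2, map_sum, map_sum]
  refine Finset.sum_congr rfl fun p _ => ?_
  rw [map_smul, map_smul, Phi_diagMul]
  rfl

theorem circ_zero_right {n : ℕ} (x : n.Partition → ℚ) : circ x 0 = 0 := by
  apply ext_ptype
  intro g
  simp [circ_ptype]

theorem circ_zero_left {n : ℕ} (x : n.Partition → ℚ) : circ 0 x = 0 := (circL x).map_zero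

theorem triple_product_in_A_infinity
    {n₁ n₂ n₃ : ℕ} (Δ₁ : Nat.Partition n₁) (Δ₂ : Nat.Partition n₂) (Δ₃ : Nat.Partition n₃) :
    mulAinf (mulAinf (ofDiag Δ₁) (ofDiag Δ₂)) (ofDiag Δ₃) =
      ∑ n ∈ Finset.Icc (max (max n₁ n₂) n₃) (n₁ + n₂ + n₃),
        DFinsupp.single n (bracket3 Δ₁ Δ₂ Δ₃ n) := by
  have hx0 : ∀ k, n₁ + n₂ + 1 ≤ k → diagMul Δ₁ Δ₂ k = 0 := by
    intro k hk
    rw [diagMul_apply, ccd, cc_zero]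
    omega
  rw [ofDiag_mul]
  have hPhi := Phi_mul (diagMul Δ₁ Δ₂) Δ₃ (n₁ + n₂ + 1) hx0
  simp only [Phi_diagMul] at hPhi
  have hbig : ∀ n, n₁ + n₂ + n₃ < n → mulAinf (diagMul Δ₁ Δ₂) (ofDiag Δ₃) n = 0 := by
    intro n hn
    rw [mul_ofDiag _ Δ₃ (n₁ + n₂ + 1) hx0, DFinsupp.finsetSum_apply]
    refine Finset.sum_eq_zero fun k hk => ?_
    rw [Finset.mem_range] at hk
    rw [DFinsupp.finsetSum_apply]
    refine Finset.sum_eq_zero fun p _ => ?_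
    have h0 : diagMul p Δ₃ n = 0 := by
      rw [diagMul_apply, ccd, cc_zero]
      omega
    rw [DFinsupp.smul_apply, h0, smul_zero]
  generalize mulAinf (diagMul Δ₁ Δ₂) (ofDiag Δ₃) = L at hPhi hbig
  have hrec : ∀ n, L n =
      circ (circ (rhoTo n (diagC Δ₁)) (rhoTo n (diagC Δ₂))) (rhoTo n (diagC Δ₃)) -
        ∑ k ∈ Finset.range n, rhoTo n (L k) := by
    intro n
    rw [← hPhi n, Phi_apply, Finset.sum_range_succ, rhoTo_self]
    abel
  have hsmall : ∀ n, n < max (max n₁ n₂) n₃ → L n = 0 := by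
    intro n
    induction n using Nat.strong_induction_on with
    | _ n ih =>
      intro hn
      rw [hrec n, Finset.sum_eq_zero, sub_zero]
      · rcases lt_max_iff.mp hn with h | h
        · rcases lt_max_iff.mp h with h | h
          · rw [rhoTo_of_lt h, circ_zero_left, circ_zero_left]
          · rw [rhoTo_of_lt h, circ_zero_right, circ_zero_left]
        · rw [rhoTo_of_lt h (diagC Δ₃), circ_zero_right]
      · intro k hk
        rw [Finset.mem_range] at hk
        rw [ih k hk (by omega), rhoTo_zero]
  have hmain : ∀ n, L n = bracket3 Δ₁ Δ₂ Δ₃ n := by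
    intro n
    induction n using Nat.strong_induction_on with
    | _ n ih =>
      rw [bracket3]
      split_ifs with h
      · rw [Finset.sum_attach (Finset.Ico (max (max n₁ n₂) n₃) n)
          (fun k => rhoTo n (bracket3 Δ₁ Δ₂ Δ₃ k)), hrec n]
        congr 1
        symm
        rw [Finset.sum_congr rfl (fun k hk => by rw [← ih k (Finset.mem_Ico.mp hk).2])]
        apply Finset.sum_subset
        · intro k hk
          exact Finset.mem_range.mpr (Finset.mem_Ico.mp hk).2
        · intro k hk hk'
          rw [Finset.mem_range] at hk
          rw [Finset.mem_Ico] at hk'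
          rw [hsmall k (by omega), rhoTo_zero]
      · by_cases h1 : n₁ + n₂ + n₃ < n
        · exact hbig n h1
        · exact hsmall n (by omega)
  refine DFinsupp.ext fun n => ?_
  rw [sum_single_apply', hmain]
  intro hn
  rw [bracket3, if_neg]
  rwa [Finset.mem_Icc] at hn
end

section
/- (Stability; the algebra A_∞° is naturally isomorphic to the algebra A_∞ of conjugacy classes of finite permutations of ℕ.) For all Young diagrams Δ₁, Δ₂ and every integer N ≥ max(|Δ₁|,|Δ₂|), the identity ρ_{N−|Δ₁|}(Δ₁) ∘ ρ_{N−|Δ₂|}(Δ₂) = Σ_{n=max(|Δ₁|,|Δ₂|)}^{min(N, |Δ₁|+|Δ₂|)} ρ_{N−n}({Δ₁Δ₂}_n) holds in the center A_N of ℚ[S_N]. In particular, the products of padded class sums in S_N are, for all N, expressed through the finitely many elements {Δ₁Δ₂}_n with n ≤ |Δ₁|+|Δ₂|, so the structure constants stabilize as N → ∞. -/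
open scoped Classical

namespace PadStab

/-- Parts of a partition different from one. -/
noncomputable def red {n : ℕ} (Δ : n.Partition) : Multiset ℕ := Δ.parts.filter (fun i => i ≠ 1)

lemma parts_eq {n : ℕ} (Δ : n.Partition) :
    Δ.parts = red Δ + Multiset.replicate (Δ.parts.count 1) 1 := by
  conv_lhs => rw [← Multiset.filter_add_not (fun i => i ≠ 1) Δ.parts]
  congr 1
  rw [← Multiset.filter_eq']
  simp

lemma sum_red {n : ℕ} (Δ : n.Partition) : (red Δ).sum + Δ.parts.count 1 = n := by
  have h := Δ.parts_sum
  rw [parts_eq Δ] at h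
  simp only [Multiset.sum_add, Multiset.sum_replicate, smul_eq_mul, mul_one] at h
  exact h

lemma two_le_red {n : ℕ} (Δ : n.Partition) : ∀ a ∈ red Δ, 2 ≤ a := by
  intro a ha
  have h := Multiset.mem_filter.mp ha
  have := Δ.parts_pos h.1
  have := h.2
  omega

lemma red_filter (c : Multiset ℕ) (hc : ∀ a ∈ c, 2 ≤ a) (k : ℕ) :
    (c + Multiset.replicate k 1).filter (fun i => i ≠ 1) = c := by
  rw [Multiset.filter_add, Multiset.filter_eq_self.2, Multiset.filter_eq_nil.2, add_zero]
  · intro a ha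
    simp [Multiset.eq_of_mem_replicate ha]
  · intro a ha
    have := hc a ha
    omega

/-- The partition of `n` with given nontrivial parts. -/
def mkP (n : ℕ) (c : Multiset ℕ) (hc : ∀ a ∈ c, 2 ≤ a) (hs : c.sum ≤ n) : n.Partition where
  parts := c + Multiset.replicate (n - c.sum) 1
  parts_pos := by
    intro i hi
    rcases Multiset.mem_add.mp hi with h1 | h2
    · have := hc i h1
      omega
    · simp [Multiset.eq_of_mem_replicate h2]
  parts_sum := by
    simp
    omega

lemma red_mkP (n : ℕ) (c : Multiset ℕ) (hc : ∀ a ∈ c, 2 ≤ a) (hs : c.sum ≤ n) :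
    red (mkP n c hc hs) = c := red_filter c hc _

lemma red_inj {n : ℕ} {Δ Λ : n.Partition} (h : red Δ = red Λ) : Δ = Λ := by
  apply Nat.Partition.ext
  have h1 := sum_red Δ
  have h2 := sum_red Λ
  rw [h] at h1
  have h3 : Δ.parts.count 1 = Λ.parts.count 1 := by omega
  rw [parts_eq Δ, parts_eq Λ, h, h3]

lemma fct_iff {n : ℕ} (g : Equiv.Perm (Fin n)) (Δ : n.Partition) :
    fullCycleType g = Δ.parts ↔ g.cycleType = red Δ := by
  have h2 : ∀ a ∈ g.cycleType, 2 ≤ a := fun a ha => Equiv.Perm.two_le_of_mem_cycleType ha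
  constructor
  · intro h
    rw [red, ← h, fullCycleType, red_filter _ h2]
  · intro h
    have h1 := sum_red Δ
    rw [fullCycleType, parts_eq Δ, h]
    congr 2
    omega

lemma sum_ct_le {n : ℕ} (g : Equiv.Perm (Fin n)) : g.cycleType.sum ≤ n := by
  simpa using g.sum_cycleType_le

/-- The partition of a permutation. -/
noncomputable def partOf {n : ℕ} (g : Equiv.Perm (Fin n)) : n.Partition :=
  mkP n g.cycleType (fun _ ha => Equiv.Perm.two_le_of_mem_cycleType ha) (sum_ct_le g)

lemma red_partOf {n : ℕ} (g : Equiv.Perm (Fin n)) : red (partOf g) = g.cycleType := red_mkP _ _ _ _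

lemma padcond_iff {n m : ℕ} (h : n ≤ m) (Δ : n.Partition) (Λ : m.Partition) :
    Λ.parts = Δ.parts + Multiset.replicate (m - n) 1 ↔ red Δ = red Λ := by
  have key : Δ.parts + Multiset.replicate (m - n) 1
      = red Δ + Multiset.replicate (Δ.parts.count 1 + (m - n)) 1 := by
    conv_lhs => rw [parts_eq Δ]
    rw [add_assoc, Multiset.replicate_add]
  rw [key]
  constructor
  · intro hh
    rw [red, red, hh, red_filter _ (two_le_red Δ)]
    rfl
  · intro hh
    have h1 := sum_red Δ
    have h2 := sum_red Λ
    rw [parts_eq Λ, hh]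
    rw [hh] at h1
    congr 2
    omega

lemma rho_eq {n N : ℕ} (h : n ≤ N) (x : n.Partition → ℚ) (Λ : N.Partition) (Δ : n.Partition)
    (hr : red Δ = red Λ) :
    rhoTo N x Λ = ((N - (red Λ).sum).choose (N - n) : ℚ) * x Δ := by
  unfold rhoTo
  rw [if_pos h, Finset.sum_eq_single Δ]
  · rw [if_pos ((padcond_iff h _ _).2 hr)]
    have h1 := sum_red Δ
    rw [hr] at h1
    have h2 : N - (red Λ).sum = Δ.parts.count 1 + (N - n) := by omega
    rw [h2, ← Nat.choose_symm_add, Nat.cast_add_choose]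
  · intro b _ hb
    rw [if_neg]
    intro hc
    exact hb (red_inj (((padcond_iff h _ _).1 hc).trans hr.symm))
  · simp

lemma rho_eq_zero {n N : ℕ} (x : n.Partition → ℚ) (Λ : N.Partition)
    (hr : n < (red Λ).sum) : rhoTo N x Λ = 0 := by
  unfold rhoTo
  split_ifs with h
  · apply Finset.sum_eq_zero
    intro Δ _
    rw [if_neg]
    intro hc
    have h1 := sum_red Δ
    rw [(padcond_iff h _ _).1 hc] at h1
    omega
  · rfl

lemma rho_self {n : ℕ} (x : n.Partition → ℚ) : rhoTo n x = x := by
  funext Λ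
  rw [rho_eq le_rfl x Λ Λ rfl]
  simp

/-- Class of permutations. -/
noncomputable def cl (n : ℕ) (c : Multiset ℕ) : Finset (Equiv.Perm (Fin n)) :=
  Finset.univ.filter (fun g => g.cycleType = c)

lemma cl_eq {n : ℕ} (Δ : n.Partition) :
    Finset.univ.filter (fun g : Equiv.Perm (Fin n) => fullCycleType g = Δ.parts) = cl n (red Δ) := by
  ext g
  simp [cl, fct_iff]

lemma card_cl {n : ℕ} (Δ : n.Partition) :
    (cl n (red Δ)).card * ((n - (red Δ).sum).factorial *
      ((red Δ).prod * ∏ i ∈ (red Δ).toFinset, ((red Δ).count i).factorial)) = n.factorial := by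
  have h := Equiv.Perm.card_of_cycleType_mul_eq (α := Fin n) (red Δ)
  have h1 := sum_red Δ
  rw [if_pos ⟨by simp; omega, two_le_red Δ⟩] at h
  simp only [Fintype.card_fin] at h
  rw [← h, cl]
  ring_nf

lemma card_cl_ne {n : ℕ} (Δ : n.Partition) : ((cl n (red Δ)).card : ℚ) ≠ 0 := by
  intro h
  have h0 : (cl n (red Δ)).card = 0 := by exact_mod_cast h
  have := card_cl Δ
  rw [h0, zero_mul] at this
  exact n.factorial_ne_zero this.symm

lemma card_cl_rel {n N : ℕ} (h : n ≤ N) (Δ : n.Partition) (Λ : N.Partition)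
    (hr : red Δ = red Λ) :
    (N - (red Λ).sum).choose (N - n) * (cl N (red Λ)).card = N.choose n * (cl n (red Δ)).card := by
  have h1 := card_cl Δ
  have h2 := card_cl Λ
  have h3 := sum_red Δ
  rw [hr] at h1 h3 ⊢
  set s := (red Λ).sum
  set X := (red Λ).prod * ∏ i ∈ (red Λ).toFinset, ((red Λ).count i).factorial
  have h4 := Nat.choose_mul_factorial_mul_factorial h
  have h5 := Nat.choose_mul_factorial_mul_factorial (show N - n ≤ N - s by omega)
  have h6 : N - s - (N - n) = n - s := by omega
  rw [h6] at h5
  have hX : 0 < (n - s).factorial * X * (N - n).factorial := by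
    have : 0 < X := by
      by_contra hX
      have : X = 0 := by omega
      rw [this] at h2
      simp at h2
      exact N.factorial_ne_zero h2.symm
    positivity
  apply Nat.eq_of_mul_eq_mul_right hX
  calc _ = (cl N (red Λ)).card * (((N - s).choose (N - n) * (N - n).factorial * (n - s).factorial) * X) := by ring
    _ = N.factorial := by rw [h5, h2]
    _ = N.choose n * ((cl n (red Λ)).card * ((n - s).factorial * X)) * (N - n).factorial := by
      rw [h1, h4]
    _ = _ := by ring

/-- Partial permutations with given type. -/
noncomputable def PP (N n : ℕ) (c : Multiset ℕ) :
    Finset (Finset (Fin N) × Equiv.Perm (Fin N)) :=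
  Finset.univ.filter (fun p => p.1.card = n ∧ p.2.support ⊆ p.1 ∧ p.2.cycleType = c)

lemma mem_PP {N n : ℕ} {c : Multiset ℕ} {p : Finset (Fin N) × Equiv.Perm (Fin N)} :
    p ∈ PP N n c ↔ p.1.card = n ∧ p.2.support ⊆ p.1 ∧ p.2.cycleType = c := by
  simp [PP]

lemma embed_coeff {N : ℕ} (x : N.Partition → ℚ) (g : Equiv.Perm (Fin N)) :
    (embedCenter x).coeff g = x (partOf g) := by
  unfold embedCenter classSum
  simp only [MonoidAlgebra.coeff_sum, MonoidAlgebra.coeff_smul, MonoidAlgebra.coeff_single,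
    Finsupp.coe_finsetSum, Finset.sum_apply, Finsupp.smul_apply, smul_eq_mul, cl_eq]
  rw [Finset.sum_eq_single (partOf g)]
  · rw [Finset.sum_eq_single g]
    · simp
    · intro b _ hb
      simp [hb]
    · intro hg
      simp [cl, red_partOf] at hg
  · intro Δ _ hΔ
    rw [Finset.sum_eq_zero, mul_zero]
    intro b hb
    rw [Finsupp.single_apply, if_neg]
    rintro rfl
    apply hΔ
    apply red_inj
    rw [red_partOf]
    simp [cl] at hb
    exact hb.symm
  · simp

lemma embed_rho {n N : ℕ} (h : n ≤ N) (Δ : n.Partition) :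
    embedCenter (rhoTo N (diagC Δ)) =
      ∑ p ∈ PP N n (red Δ), MonoidAlgebra.single p.2 (1 : ℚ) := by
  apply MonoidAlgebra.coeff_injective
  ext g
  rw [embed_coeff]
  simp only [MonoidAlgebra.coeff_sum, MonoidAlgebra.coeff_single,
    Finsupp.coe_finsetSum, Finset.sum_apply, Finsupp.single_apply]
  rw [Finset.sum_boole]
  by_cases hg : g.cycleType = red Δ
  · rw [rho_eq h _ _ Δ (by rw [red_partOf, hg]), red_partOf, diagC, if_pos rfl, mul_one]
    congr 1
    have h1 := sum_red Δ
    have hs : g.support.card = (red Δ).sum := by rw [← hg, Equiv.Perm.sum_cycleType]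
    have h2 := Finset.card_filter_powersetCard_subset g.support Finset.univ n
      (Finset.subset_univ _) (by omega)
    have h3 : ((PP N n (red Δ)).filter (fun p => p.2 = g)) =
      ((Finset.univ.powersetCard n).filter (g.support ⊆ ·)).map
        ⟨fun I => (I, g), fun a b hab => by simpa using hab⟩ := by
      ext ⟨I, g'⟩
      simp only [Finset.mem_filter, mem_PP, Finset.mem_map, Finset.mem_powersetCard]
      constructor
      · rintro ⟨⟨ha, hb, hc⟩, rfl⟩
        exact ⟨I, ⟨⟨Finset.subset_univ _, ha⟩, hb⟩, rfl⟩
      · rintro ⟨I', ⟨⟨-, ha⟩, hb⟩, heq⟩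
        obtain ⟨rfl, rfl⟩ := Prod.mk.inj heq
        exact ⟨⟨ha, hb, hg⟩, rfl⟩
    rw [h3, Finset.card_map, h2, hg, hs]
    simp only [Finset.card_univ, Fintype.card_fin]
    rw [← Nat.choose_symm_of_eq_add]
    omega
  · have h0 : (PP N n (red Δ)).filter (fun p => p.2 = g) = ∅ := by
      apply Finset.filter_eq_empty_iff.2
      intro p hp hpg
      apply hg
      rw [← hpg]
      exact (mem_PP.1 hp).2.2
    rw [h0]
    simp only [Finset.card_empty, Nat.cast_zero]
    unfold rhoTo
    rw [if_pos h]
    apply Finset.sum_eq_zero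
    intro Δ' _
    split_ifs with hc
    · have := (padcond_iff h _ _).1 hc
      rw [red_partOf] at this
      rw [diagC, if_neg, mul_zero]
      rintro rfl
      exact hg this.symm
    · rfl

/-- All pairs of partial permutations. -/
noncomputable def QQ (N n₁ n₂ : ℕ) (c₁ c₂ c : Multiset ℕ) :
    Finset ((Finset (Fin N) × Equiv.Perm (Fin N)) × (Finset (Fin N) × Equiv.Perm (Fin N))) :=
  (PP N n₁ c₁ ×ˢ PP N n₂ c₂).filter (fun z => (z.1.2 * z.2.2).cycleType = c)

lemma circ_card {n₁ n₂ N : ℕ} (h₁ : n₁ ≤ N) (h₂ : n₂ ≤ N) (Δ₁ : n₁.Partition) (Δ₂ : n₂.Partition)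
    (Λ : N.Partition) :
    circ (rhoTo N (diagC Δ₁)) (rhoTo N (diagC Δ₂)) Λ * (cl N (red Λ)).card =
      (QQ N n₁ n₂ (red Δ₁) (red Δ₂) (red Λ)).card := by
  unfold circ classCoeff
  rw [cl_eq, div_mul_cancel₀ _ (card_cl_ne Λ), embed_rho h₁, embed_rho h₂,
    Finset.sum_mul_sum, ← Finset.sum_product']
  simp only [MonoidAlgebra.single_mul_single, mul_one, MonoidAlgebra.coeff_sum,
    MonoidAlgebra.coeff_single,
    Finsupp.coe_finsetSum, Finset.sum_apply, Finsupp.single_apply]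
  rw [Finset.sum_comm, QQ, ← Finset.sum_boole]
  apply Finset.sum_congr rfl
  intro z _
  rw [Finset.sum_ite_eq]
  simp [cl]

/-- Transport of partial permutations. -/
noncomputable def phi {n N : ℕ} {I : Finset (Fin N)} (f : Fin n ≃ {x // x ∈ I})
    (p : Finset (Fin n) × Equiv.Perm (Fin n)) : Finset (Fin N) × Equiv.Perm (Fin N) :=
  (p.1.map f.asEmbedding, p.2.extendDomain f)

lemma phi_inj {n N : ℕ} {I : Finset (Fin N)} (f : Fin n ≃ {x // x ∈ I}) :
    Function.Injective (phi f) := by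
  rintro ⟨J, g⟩ ⟨J', g'⟩ h
  obtain ⟨h1, h2⟩ := Prod.mk.inj h
  have h3 := Finset.map_injective _ h1
  have h4 : g = g' := Equiv.Perm.extendDomainHom_injective f h2
  simp only at h3
  rw [h3, h4]

lemma phi_mem {n N m : ℕ} {I : Finset (Fin N)} (f : Fin n ≃ {x // x ∈ I}) {c : Multiset ℕ}
    (p : Finset (Fin n) × Equiv.Perm (Fin n)) : phi f p ∈ PP N m c ↔ p ∈ PP n m c := by
  simp only [mem_PP, phi, Finset.card_map, Equiv.Perm.support_extend_domain,
    Finset.map_subset_map, Equiv.Perm.cycleType_extendDomain]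

lemma map_univ_f {n N : ℕ} {I : Finset (Fin N)} (f : Fin n ≃ {x // x ∈ I}) :
    Finset.univ.map f.asEmbedding = I := by
  ext x
  simp only [Finset.mem_map, Finset.mem_univ, true_and, Equiv.asEmbedding_apply]
  constructor
  · rintro ⟨a, rfl⟩
    exact (f a).2
  · intro hx
    exact ⟨f.symm ⟨x, hx⟩, by simp⟩

lemma phi_surj {n N : ℕ} {I : Finset (Fin N)} (f : Fin n ≃ {x // x ∈ I})
    (q : Finset (Fin N) × Equiv.Perm (Fin N)) (h1 : q.2.support ⊆ q.1) (h2 : q.1 ⊆ I) :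
    ∃ p, phi f p = q := by
  obtain ⟨J, g⟩ := q
  simp only at h1 h2
  have hfix : ∀ x, x ∉ I → g x = x := by
    intro x hx
    by_contra hne
    exact hx (h2 (h1 (Equiv.Perm.mem_support.2 hne)))
  have hinv : ∀ x, g x ∈ I ↔ x ∈ I := by
    intro x
    constructor
    · intro hx
      by_contra hn
      rw [hfix x hn] at hx
      exact hn hx
    · intro hx
      by_contra hn
      have := g.injective (hfix _ hn)
      rw [this] at hn
      exact hn hx
  refine ⟨(Finset.univ.filter (fun a => (f a : Fin N) ∈ J),
    (f.trans (g.subtypePerm hinv)).trans f.symm), ?_⟩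
  unfold phi
  apply Prod.ext
  · ext x
    simp only [Finset.mem_map, Finset.mem_filter, Finset.mem_univ, true_and,
      Equiv.asEmbedding_apply]
    constructor
    · rintro ⟨a, ha, rfl⟩
      exact ha
    · intro hx
      exact ⟨f.symm ⟨x, h2 hx⟩, by simpa using hx, by simp⟩
  · apply Equiv.ext
    intro x
    by_cases hx : x ∈ I
    · simp only
      rw [Equiv.Perm.extendDomain_apply_subtype _ _ hx]
      simp
    · simp only
      rw [Equiv.Perm.extendDomain_apply_not_subtype _ _ hx, hfix x hx]

/-- Pairs of partial permutations with given union of domains. -/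
noncomputable def RR (N n₁ n₂ : ℕ) (c₁ c₂ c : Multiset ℕ) (I : Finset (Fin N)) :
    Finset ((Finset (Fin N) × Equiv.Perm (Fin N)) × (Finset (Fin N) × Equiv.Perm (Fin N))) :=
  (QQ N n₁ n₂ c₁ c₂ c).filter (fun z => z.1.1 ∪ z.2.1 = I)

lemma mem_RR {N n₁ n₂ : ℕ} {c₁ c₂ c : Multiset ℕ} {I : Finset (Fin N)}
    {z : (Finset (Fin N) × Equiv.Perm (Fin N)) × (Finset (Fin N) × Equiv.Perm (Fin N))} :
    z ∈ RR N n₁ n₂ c₁ c₂ c I ↔ z.1 ∈ PP N n₁ c₁ ∧ z.2 ∈ PP N n₂ c₂ ∧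
      (z.1.2 * z.2.2).cycleType = c ∧ z.1.1 ∪ z.2.1 = I := by
  simp [RR, QQ, and_assoc]

/-- Number of pairs with full union. -/
noncomputable def tcount (n₁ n₂ : ℕ) (c₁ c₂ c : Multiset ℕ) (n : ℕ) : ℕ :=
  (RR n n₁ n₂ c₁ c₂ c Finset.univ).card

lemma card_RR {N n₁ n₂ : ℕ} (c₁ c₂ c : Multiset ℕ) (I : Finset (Fin N)) :
    (RR N n₁ n₂ c₁ c₂ c I).card = tcount n₁ n₂ c₁ c₂ c I.card := by
  have f : Fin I.card ≃ {x // x ∈ I} := I.equivFin.symm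
  symm
  unfold tcount
  apply Finset.card_nbij (Prod.map (phi f) (phi f))
  · rintro ⟨p, q⟩ hz
    obtain ⟨h1, h2, h3, h4⟩ := mem_RR.1 hz
    refine mem_RR.2 ⟨(phi_mem f p).2 h1, (phi_mem f q).2 h2, ?_, ?_⟩
    · simp only [Prod.map, phi]
      rw [Equiv.Perm.extendDomain_mul, Equiv.Perm.cycleType_extendDomain]
      exact h3
    · simp only [Prod.map, phi]
      simp only at h4
      rw [← Finset.map_union, h4, map_univ_f]
  · exact ((phi_inj f).prodMap (phi_inj f)).injOn
  · rintro ⟨p, q⟩ hz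
    obtain ⟨h1, h2, h3, h4⟩ := mem_RR.1 (Finset.mem_coe.1 hz)
    simp only at h1 h2 h3 h4
    obtain ⟨p, rfl⟩ := phi_surj f p (mem_PP.1 h1).2.1 (h4 ▸ Finset.subset_union_left)
    obtain ⟨q, rfl⟩ := phi_surj f q (mem_PP.1 h2).2.1 (h4 ▸ Finset.subset_union_right)
    refine ⟨(p, q), Finset.mem_coe.2 (mem_RR.2 ⟨(phi_mem f p).1 h1, (phi_mem f q).1 h2, ?_, ?_⟩), rfl⟩
    · simp only [phi] at h3
      rw [Equiv.Perm.extendDomain_mul, Equiv.Perm.cycleType_extendDomain] at h3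
      exact h3
    · simp only [phi] at h4
      rw [← Finset.map_union] at h4
      exact Finset.map_injective _ (h4.trans (map_univ_f f).symm)

lemma tcount_zero {n₁ n₂ n : ℕ} (c₁ c₂ c : Multiset ℕ)
    (h : n ∉ Finset.Icc (max n₁ n₂) (n₁ + n₂)) : tcount n₁ n₂ c₁ c₂ c n = 0 := by
  unfold tcount
  rw [Finset.card_eq_zero, Finset.eq_empty_iff_forall_notMem]
  intro z hz
  obtain ⟨h1, h2, -, h4⟩ := mem_RR.1 hz
  have e1 := (mem_PP.1 h1).1
  have e2 := (mem_PP.1 h2).1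
  have l1 := Finset.card_le_univ z.1.1
  have l2 := Finset.card_le_univ z.2.1
  have l3 := Finset.card_union_le z.1.1 z.2.1
  rw [h4] at l3
  simp only [Finset.card_univ, Fintype.card_fin] at l1 l2 l3
  apply h
  rw [Finset.mem_Icc]
  omega

lemma tcount_zero' {n₁ n₂ n : ℕ} (c₁ c₂ c : Multiset ℕ)
    (h : n < c.sum) : tcount n₁ n₂ c₁ c₂ c n = 0 := by
  unfold tcount
  rw [Finset.card_eq_zero, Finset.eq_empty_iff_forall_notMem]
  intro z hz
  obtain ⟨-, -, h3, -⟩ := mem_RR.1 hz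
  have := sum_ct_le (z.1.2 * z.2.2)
  rw [h3] at this
  omega

lemma card_QQ {N n₁ n₂ : ℕ} (c₁ c₂ c : Multiset ℕ) :
    (QQ N n₁ n₂ c₁ c₂ c).card =
      ∑ n ∈ Finset.Icc (max n₁ n₂) (min N (n₁ + n₂)), N.choose n * tcount n₁ n₂ c₁ c₂ c n := by
  have h1 : (QQ N n₁ n₂ c₁ c₂ c).card =
      ∑ I : Finset (Fin N), tcount n₁ n₂ c₁ c₂ c I.card := by
    rw [Finset.card_eq_sum_card_fiberwise (f := fun z => z.1.1 ∪ z.2.1) (t := Finset.univ)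
      (fun _ _ => Finset.mem_coe.2 (Finset.mem_univ _))]
    apply Finset.sum_congr rfl
    intro I _
    rw [← card_RR, RR]
  rw [h1, ← Finset.powerset_univ, Finset.sum_powerset_apply_card (tcount n₁ n₂ c₁ c₂ c)]
  simp only [Finset.card_univ, Fintype.card_fin, smul_eq_mul]
  symm
  apply Finset.sum_subset
  · intro n hn
    simp only [Finset.mem_Icc, Finset.mem_range] at hn ⊢
    omega
  · intro n hn hn'
    rw [tcount_zero, mul_zero]
    simp only [Finset.mem_Icc, Finset.mem_range] at hn hn' ⊢
    omega

/-- Explicit form of the bracket. -/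
noncomputable def B {n₁ n₂ : ℕ} (Δ₁ : n₁.Partition) (Δ₂ : n₂.Partition) (n : ℕ) :
    n.Partition → ℚ :=
  fun Λ => (tcount n₁ n₂ (red Δ₁) (red Δ₂) (red Λ) n : ℚ) / (cl n (red Λ)).card

lemma rho_B {n₁ n₂ : ℕ} (Δ₁ : n₁.Partition) (Δ₂ : n₂.Partition) {n N : ℕ} (h : n ≤ N)
    (Λ : N.Partition) :
    rhoTo N (B Δ₁ Δ₂ n) Λ * (cl N (red Λ)).card =
      ((N.choose n * tcount n₁ n₂ (red Δ₁) (red Δ₂) (red Λ) n : ℕ) : ℚ) := by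
  by_cases hs : (red Λ).sum ≤ n
  · have hr := red_mkP n (red Λ) (two_le_red Λ) hs
    have h1 := card_cl_rel h _ Λ hr
    have h2 := card_cl_ne (mkP n (red Λ) (two_le_red Λ) hs)
    rw [rho_eq h _ Λ _ hr, B]
    rw [hr] at h1 h2 ⊢
    have h3 : ((N - (red Λ).sum).choose (N - n) : ℚ) * (cl N (red Λ)).card
      = N.choose n * (cl n (red Λ)).card := by exact_mod_cast h1
    rw [mul_right_comm, h3]
    push_cast
    field_simp
  · rw [rho_eq_zero _ _ (by omega), tcount_zero' _ _ _ (by omega)]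
    simp

lemma circ_B {n₁ n₂ : ℕ} (Δ₁ : n₁.Partition) (Δ₂ : n₂.Partition) {N : ℕ} (hN : max n₁ n₂ ≤ N) :
    circ (rhoTo N (diagC Δ₁)) (rhoTo N (diagC Δ₂)) =
      ∑ n ∈ Finset.Icc (max n₁ n₂) (min N (n₁ + n₂)), rhoTo N (B Δ₁ Δ₂ n) := by
  funext Λ
  apply mul_right_cancel₀ (card_cl_ne Λ)
  rw [circ_card (by omega) (by omega), card_QQ, Finset.sum_apply, Finset.sum_mul, Nat.cast_sum]
  apply Finset.sum_congr rfl
  intro n hn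
  rw [Finset.mem_Icc] at hn
  rw [rho_B _ _ (by omega)]

lemma bracket_eq {n₁ n₂ : ℕ} (Δ₁ : n₁.Partition) (Δ₂ : n₂.Partition) (n : ℕ) :
    max n₁ n₂ ≤ n → n ≤ n₁ + n₂ → bracket Δ₁ Δ₂ n = B Δ₁ Δ₂ n := by
  induction n using Nat.strong_induction_on with
  | _ n ih =>
    intro h1 h2
    rw [bracket, if_pos ⟨h1, h2⟩, Finset.sum_attach (Finset.Ico (max n₁ n₂) n)
      (fun k => rhoTo n (bracket Δ₁ Δ₂ k)), circ_B Δ₁ Δ₂ h1, min_eq_left h2,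
      ← Finset.Ico_insert_right h1, Finset.sum_insert (by simp), rho_self]
    rw [add_sub_assoc, sub_eq_zero.2, add_zero]
    apply Finset.sum_congr rfl
    intro k hk
    rw [Finset.mem_Ico] at hk
    rw [ih k hk.2 hk.1 (by omega)]

end PadStab

theorem stability_of_products_of_padded_class_sums
    {n₁ n₂ : ℕ} (Δ₁ : Nat.Partition n₁) (Δ₂ : Nat.Partition n₂) (N : ℕ)
    (hN : max n₁ n₂ ≤ N) :
    circ (rhoTo N (diagC Δ₁)) (rhoTo N (diagC Δ₂)) =
      ∑ n ∈ Finset.Icc (max n₁ n₂) (min N (n₁ + n₂)), rhoTo N (bracket Δ₁ Δ₂ n) := by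
  rw [PadStab.circ_B Δ₁ Δ₂ hN]
  apply Finset.sum_congr rfl
  intro n hn
  rw [Finset.mem_Icc] at hn
  rw [PadStab.bracket_eq Δ₁ Δ₂ n hn.1 (by omega)]
end

section
/- For every Young diagram Δ and every N ≥ 1, the operator 𝒲_N(Δ) maps the subring ℚ[p₁, p₂, …] ⊆ ℚ[X_{ij} : 1 ≤ i,j ≤ N] of polynomials in the power sums p_k = tr X^k (equivalently, the ring of conjugation-invariant, i.e. symmetric in the eigenvalues, polynomial functions of the matrix X) to itself. -/
open scoped Classical
open MvPolynomial

/-- The polynomial ring `ℚ[X_{ij} : 1 ≤ i,j ≤ N]` in the entries of an `N×N` matrix of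
independent variables. -/
abbrev RN (N : ℕ) : Type := MvPolynomial (Fin N × Fin N) ℚ

/-- The `N×N` matrix `X` of independent variables. -/
noncomputable def XM (N : ℕ) : Matrix (Fin N) (Fin N) (RN N) :=
  Matrix.of fun i j => MvPolynomial.X (i, j)

/-- The power sums `p_k = tr X^k`. -/
noncomputable def pSub (N : ℕ) (k : ℕ+) : RN N := Matrix.trace ((XM N) ^ (k : ℕ))

/-- Substitution `F ↦ F(p(X))` of `p_k = tr X^k` into a polynomial in `p₁, p₂, …`
(the variable of index `k : ℕ+` is `p_k`). -/
noncomputable def psubst (N : ℕ) : MvPolynomial ℕ+ ℚ →ₐ[ℚ] RN N :=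
  MvPolynomial.aeval (pSub N)

/-- The operator `D_{ab} = Σ_{e=1}^N X_{ae} ∂/∂X_{be}`. -/
noncomputable def DN (N : ℕ) (a b : Fin N) (P : RN N) : RN N :=
  ∑ e : Fin N, MvPolynomial.X (a, e) * MvPolynomial.pderiv (b, e) P

/-- The normally ordered operator
`:D_{a₁b₁}⋯D_{a_nb_n}: = Σ_{e₁,…,e_n=1}^N X_{a₁e₁}⋯X_{a_ne_n} ∂ⁿ/(∂X_{b₁e₁}⋯∂X_{b_ne_n})`. -/
noncomputable def NOpN (N : ℕ) {n : ℕ} (a b : Fin n → Fin N) (P : RN N) : RN N :=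
  ∑ e : Fin n → Fin N,
    (∏ i, MvPolynomial.X (a i, e i)) *
      (List.ofFn (fun i => ((b i, e i) : Fin N × Fin N))).foldr
        (fun v G => MvPolynomial.pderiv v G) P

/-- `κ(Δ) = (∏_k m_k! k^{m_k})⁻¹` where `m_k` is the number of rows of length `k`. -/
noncomputable def kappa (parts : Multiset ℕ) : ℚ :=
  (∏ k ∈ parts.toFinset, (((parts.count k).factorial : ℚ) * (k : ℚ) ^ (parts.count k)))⁻¹

/-- The operator `𝒲_N(Δ) = κ(Δ) Σ_{a₁,…,a_n=1}^N :D_{a₁a_{g(1)}}⋯D_{a_na_{g(n)}}:`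
computed from a permutation `g` of cycle type `Δ`. -/
noncomputable def WN (N : ℕ) {n : ℕ} (Δ : Nat.Partition n) (g : Equiv.Perm (Fin n))
    (P : RN N) : RN N :=
  kappa Δ.parts • ∑ a : Fin n → Fin N, NOpN N a (fun i => a (g i)) P

namespace WNproof

lemma prod_decomp {M : Type*} [CommMonoid M] {n : ℕ} (σ : Equiv.Perm (Fin n)) (j : Fin n)
    (f : Fin (n + 1) → Fin (n + 1) → M) :
    ∏ i, f i (Equiv.Perm.decomposeFin.symm ((σ j).succ, σ) i) =
      f 0 (σ j).succ * (f j.succ 0 * ∏ i ∈ Finset.univ.erase j, f i.succ (σ i).succ) := by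
  rw [Fin.prod_univ_succ, Equiv.Perm.decomposeFin_symm_apply_zero]
  congr 1
  rw [← Finset.mul_prod_erase _ _ (Finset.mem_univ j)]
  congr 1
  · rw [Equiv.Perm.decomposeFin_symm_apply_succ, Equiv.swap_apply_right]
  · refine Finset.prod_congr rfl fun i hi => ?_
    rw [Equiv.Perm.decomposeFin_symm_apply_succ, Equiv.swap_apply_of_ne_of_ne (Fin.succ_ne_zero _)]
    intro h
    exact (Finset.ne_of_mem_erase hi) (σ.injective (Fin.succ_injective _ h))

lemma prod_decomp0 {M : Type*} [CommMonoid M] {n : ℕ} (σ : Equiv.Perm (Fin n))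
    (f : Fin (n + 1) → Fin (n + 1) → M) :
    ∏ i, f i (Equiv.Perm.decomposeFin.symm (0, σ) i) =
      f 0 0 * ∏ i, f i.succ (σ i).succ := by
  simp [Fin.prod_univ_succ]

/-- The subalgebra generated by the power sums. -/
noncomputable def A (N : ℕ) : Subalgebra ℚ (RN N) := (psubst N).range

lemma trace_mem (N k : ℕ) : Matrix.trace ((XM N) ^ k) ∈ A N := by
  rcases Nat.eq_zero_or_pos k with rfl | hk
  · rw [pow_zero, Matrix.trace_one]
    exact natCast_mem _ _
  · exact ⟨X ⟨k, hk⟩, aeval_X _ _⟩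

lemma sum_cons {N n : ℕ} {R : Type*} [AddCommMonoid R] (F : (Fin (n + 1) → Fin N) → R) :
    ∑ c, F c = ∑ c' : Fin n → Fin N, ∑ x : Fin N, F (Fin.cons x c') := by
  rw [← (Fin.consEquiv (fun _ : Fin (n+1) => Fin N)).sum_comp, Fintype.sum_prod_type,
    Finset.sum_comm]
  rfl

lemma S_mem (N : ℕ) : ∀ (n : ℕ) (σ : Equiv.Perm (Fin n)) (k : Fin n → ℕ),
    ∑ c : Fin n → Fin N, ∏ i, ((XM N) ^ (k i)) (c i) (c (σ i)) ∈ A N := by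
  intro n
  induction n with
  | zero =>
    intro σ k
    refine sum_mem fun c _ => ?_
    simp only [Finset.univ_eq_empty, Finset.prod_empty]
    exact one_mem _
  | succ n ih =>
    intro τ k
    obtain ⟨⟨p, σ⟩, rfl⟩ := Equiv.Perm.decomposeFin.symm.surjective τ
    rw [sum_cons]
    induction p using Fin.cases with
    | zero =>
      have := mul_mem (trace_mem N (k 0)) (ih σ (fun i => k i.succ))
      convert this using 1
      rw [Finset.mul_sum]
      refine Finset.sum_congr rfl fun c' _ => ?_
      rw [Matrix.trace, Finset.sum_mul]
      refine Finset.sum_congr rfl fun x _ => ?_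
      rw [prod_decomp0 σ (fun i j => ((XM N) ^ (k i)) ((Fin.cons x c' : Fin (n+1) → Fin N) i)
        ((Fin.cons x c' : Fin (n+1) → Fin N) j))]
      simp
    | succ q =>
      obtain ⟨j, rfl⟩ := σ.surjective q
      have := ih σ (Function.update (fun i => k i.succ) j (k j.succ + k 0))
      convert this using 1
      refine Finset.sum_congr rfl fun c' _ => ?_
      rw [← Finset.mul_prod_erase _ _ (Finset.mem_univ j), Function.update_self, pow_add,
        Matrix.mul_apply, Finset.sum_mul]
      refine Finset.sum_congr rfl fun x _ => ?_
      rw [prod_decomp σ j (fun i j => ((XM N) ^ (k i)) ((Fin.cons x c' : Fin (n+1) → Fin N) i)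
        ((Fin.cons x c' : Fin (n+1) → Fin N) j))]
      simp only [Fin.cons_zero, Fin.cons_succ]
      rw [← mul_assoc, mul_comm (((XM N) ^ (k 0)) _ _)]
      congr 1
      refine Finset.prod_congr rfl fun i hi => ?_
      rw [Function.update_of_ne (Finset.ne_of_mem_erase hi)]

lemma pderiv_pow (N : ℕ) (b e : Fin N) (k : ℕ) : ∀ i j,
    pderiv (b, e) (((XM N) ^ k) i j) =
      ∑ l ∈ Finset.range k, ((XM N) ^ l) i b * ((XM N) ^ (k - 1 - l)) e j := by
  induction k with
  | zero =>
    intro i j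
    rw [pow_zero, Matrix.one_apply]
    split_ifs <;> simp
  | succ k ih =>
    intro i j
    rw [pow_succ, Matrix.mul_apply, map_sum]
    simp only [Derivation.leibniz, smul_eq_mul, ih]
    rw [Finset.sum_add_distrib, Finset.sum_range_succ, add_comm]
    congr 1
    · simp only [Finset.mul_sum]
      rw [Finset.sum_comm]
      refine Finset.sum_congr rfl fun l hl => ?_
      have h : k + 1 - 1 - l = (k - 1 - l) + 1 := by
        have := Finset.mem_range.1 hl
        omega
      rw [h, pow_succ, Matrix.mul_apply, Finset.mul_sum]
      refine Finset.sum_congr rfl fun m _ => ?_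
      ring
    · have h : k + 1 - 1 - k = 0 := by omega
      rw [h, pow_zero, Matrix.one_apply]
      simp only [XM, Matrix.of_apply, pderiv_X, Pi.single_apply, Prod.mk.injEq]
      rw [Finset.sum_eq_single b]
      · by_cases hj : e = j <;> simp [hj, eq_comm]
      · intro m _ hm
        simp [hm]
      · simp

lemma pderiv_trace (N : ℕ) (b e : Fin N) (k : ℕ) :
    pderiv (b, e) (Matrix.trace ((XM N) ^ k)) = (k : RN N) * ((XM N) ^ (k - 1)) e b := by
  simp only [Matrix.trace, Matrix.diag, map_sum, pderiv_pow]
  rw [Finset.sum_comm]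
  rw [Finset.sum_congr rfl (g := fun _ => ((XM N) ^ (k - 1)) e b)]
  · simp
  · intro l hl
    have h : k - 1 = (k - 1 - l) + l := by
      have := Finset.mem_range.1 hl
      omega
    conv_rhs => rw [h, pow_add, Matrix.mul_apply]
    exact Finset.sum_congr rfl fun m _ => mul_comm _ _

lemma leibniz_prod' {ι σ : Type*} [DecidableEq ι] (v : σ) (s : Finset ι) (f : ι → MvPolynomial σ ℚ) :
    pderiv v (∏ i ∈ s, f i) = ∑ j ∈ s, (∏ i ∈ s.erase j, f i) • pderiv v (f j) := by
  induction s using Finset.induction_on with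
  | empty => simp
  | insert a s ha ih =>
    rw [Finset.prod_insert ha, Derivation.leibniz, ih, Finset.sum_insert ha,
      Finset.erase_insert ha, add_comm, Finset.smul_sum]
    congr 1
    refine Finset.sum_congr rfl fun j hj => ?_
    have hja : a ≠ j := fun h => ha (h ▸ hj)
    rw [Finset.erase_insert_of_ne hja, Finset.prod_insert (fun h => ha (Finset.mem_of_mem_erase h)),
      smul_smul]

/-- generators -/
noncomputable def gen (N n : ℕ) (σ : Equiv.Perm (Fin n)) (k : Fin n → ℕ) :
    (Fin n → Fin N) → (Fin n → Fin N) → RN N :=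
  fun b e => ∏ i, ((XM N) ^ (k i)) (e i) (b (σ i))

noncomputable def T (N n : ℕ) : Submodule (A N) ((Fin n → Fin N) → (Fin n → Fin N) → RN N) :=
  Submodule.span (A N) {t | ∃ σ k, t = gen N n σ k}

lemma gen_mem (N n : ℕ) (σ : Equiv.Perm (Fin n)) (k : Fin n → ℕ) : gen N n σ k ∈ T N n :=
  Submodule.subset_span ⟨σ, k, rfl⟩

/-- derivative of coefficients -/
lemma pderiv_coeff (N n : ℕ) (σ : Equiv.Perm (Fin n)) (k : Fin n → ℕ) (F : MvPolynomial ℕ+ ℚ) :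
    (fun (b e : Fin (n + 1) → Fin N) => pderiv (b 0, e 0) (psubst N F) *
      gen N n σ k (Fin.tail b) (Fin.tail e)) ∈ T N (n + 1) := by
  induction F using MvPolynomial.induction_on with
  | C a =>
    convert (T N (n+1)).zero_mem using 1
    funext b e
    simp [psubst]
  | add p q hp hq =>
    convert (T N (n+1)).add_mem hp hq using 1
    funext b e
    simp [add_mul]
  | mul_X p m hp =>
    have h1 := (T N (n+1)).smul_mem (⟨psubst N (X m), ⟨_, rfl⟩⟩ : A N) hp
    have h2 := (T N (n+1)).smul_mem
      ((⟨psubst N p, ⟨_, rfl⟩⟩ : A N) * ((m : ℕ) : A N))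
      (gen_mem N (n+1) (Equiv.Perm.decomposeFin.symm (0, σ))
        (Fin.cons ((m : ℕ) - 1) k))
    convert (T N (n+1)).add_mem h2 h1 using 1
    funext b e
    simp only [Pi.add_apply, Pi.smul_apply, Subalgebra.smul_def, gen, smul_eq_mul]
    rw [prod_decomp0 σ (fun i j => ((XM N) ^ ((Fin.cons ((m : ℕ) - 1) k : Fin (n+1) → ℕ) i))
      (e i) (b j))]
    have : psubst N (X m) = Matrix.trace ((XM N) ^ (m : ℕ)) := by simp [psubst, pSub]
    rw [map_mul, Derivation.leibniz, this, pderiv_trace]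
    simp only [smul_eq_mul, Fin.cons_zero, Fin.cons_succ, Fin.tail]
    push_cast
    ring

lemma pderiv_gen (N n : ℕ) (σ : Equiv.Perm (Fin n)) (k : Fin n → ℕ) :
    (fun (b e : Fin (n + 1) → Fin N) => pderiv (b 0, e 0)
      (gen N n σ k (Fin.tail b) (Fin.tail e))) ∈ T N (n + 1) := by
  have : (fun (b e : Fin (n + 1) → Fin N) => pderiv (b 0, e 0)
      (gen N n σ k (Fin.tail b) (Fin.tail e))) =
      ∑ j : Fin n, ∑ l ∈ Finset.range (k j),
        gen N (n+1) (Equiv.Perm.decomposeFin.symm ((σ j).succ, σ))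
          (Fin.cons (k j - 1 - l) (Function.update k j l)) := by
    funext b e
    simp only [Finset.sum_apply, gen]
    rw [leibniz_prod']
    refine Finset.sum_congr rfl fun j _ => ?_
    rw [pderiv_pow, smul_eq_mul, Finset.mul_sum]
    refine Finset.sum_congr rfl fun l _ => ?_
    rw [prod_decomp σ j (fun i i' => ((XM N) ^
      ((Fin.cons (k j - 1 - l) (Function.update k j l) : Fin (n+1) → ℕ) i)) (e i) (b i'))]
    simp only [Fin.cons_zero, Fin.cons_succ, Fin.tail, Function.update_self]
    have : ∏ i ∈ Finset.univ.erase j, ((XM N) ^ (Function.update k j l i)) (e i.succ) (b (σ i).succ)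
        = ∏ i ∈ Finset.univ.erase j, ((XM N) ^ (k i)) (e i.succ) (b (σ i).succ) := by
      refine Finset.prod_congr rfl fun i hi => ?_
      rw [Function.update_of_ne (Finset.ne_of_mem_erase hi)]
    rw [this]
    ring
  rw [this]
  exact sum_mem fun j _ => sum_mem fun l _ => gen_mem _ _ _ _

lemma pderiv_T (N n : ℕ) (t) (ht : t ∈ T N n) :
    (fun (b e : Fin (n + 1) → Fin N) => pderiv (b 0, e 0)
      (t (Fin.tail b) (Fin.tail e))) ∈ T N (n + 1) := by
  -- elements of the span are sums of coefficient times generator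
  have key : ∀ c : A N, ∀ t ∈ T N n,
      (fun (b e : Fin (n + 1) → Fin N) => pderiv (b 0, e 0)
        ((c • t) (Fin.tail b) (Fin.tail e))) ∈ T N (n + 1) := by
    intro c t ht
    induction ht using Submodule.span_induction generalizing c with
    | mem t ht =>
      obtain ⟨σ, k, rfl⟩ := ht
      obtain ⟨_, F, rfl⟩ := c
      convert (T N (n+1)).add_mem
        ((T N (n+1)).smul_mem (⟨psubst N F, ⟨_, rfl⟩⟩ : A N) (pderiv_gen N n σ k))
        (pderiv_coeff N n σ k F) using 1
      funext b e
      simp only [Pi.add_apply, Pi.smul_apply, Subalgebra.smul_def, smul_eq_mul,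
        Derivation.leibniz]
      change psubst N F * _ + _ * pderiv _ (psubst N F) = _
      ring
    | zero =>
      convert (T N (n+1)).zero_mem using 1
      funext b e
      simp
    | add s t _ _ hs ht =>
      convert (T N (n+1)).add_mem (hs c) (ht c) using 1
      funext b e
      simp [smul_add]
    | smul d t _ ht =>
      rw [smul_smul]
      exact ht (c * d)
  have := key 1 t ht
  rwa [one_smul] at this

lemma foldr_T (N : ℕ) (F : MvPolynomial ℕ+ ℚ) : ∀ n : ℕ,
    (fun (b e : Fin n → Fin N) =>
      (List.ofFn (fun i => ((b i, e i) : Fin N × Fin N))).foldr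
        (fun v G => MvPolynomial.pderiv v G) (psubst N F)) ∈ T N n := by
  intro n
  induction n with
  | zero =>
    convert (T N 0).smul_mem (⟨psubst N F, ⟨_, rfl⟩⟩ : A N) (gen_mem N 0 1 0) using 1
    funext b e
    simp [gen, Subalgebra.smul_def]
  | succ n ih =>
    convert pderiv_T N n _ ih using 1
    funext b e
    simp [List.ofFn_succ, Fin.tail]

lemma contract (N n : ℕ) (g : Equiv.Perm (Fin n)) (t) (ht : t ∈ T N n) :
    ∑ a : Fin n → Fin N, ∑ e : Fin n → Fin N, (∏ i, X (a i, e i)) * t (fun i => a (g i)) e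
      ∈ A N := by
  induction ht using Submodule.span_induction with
  | mem t ht =>
    obtain ⟨σ, k, rfl⟩ := ht
    convert S_mem N n (σ.trans g) (fun i => 1 + k i) using 1
    refine Finset.sum_congr rfl fun a _ => ?_
    simp only [pow_add, Matrix.mul_apply, gen, ← Finset.prod_mul_distrib]
    rw [Finset.prod_univ_sum, Fintype.piFinset_univ]
    simp [XM]
  | zero => simp
  | add s t _ _ hs ht =>
    simp only [Pi.add_apply, mul_add, Finset.sum_add_distrib]
    exact add_mem hs ht
  | smul c t _ ht =>
    convert mul_mem c.2 ht using 1
    simp only [Finset.mul_sum, Pi.smul_apply, Subalgebra.smul_def, smul_eq_mul]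
    refine Finset.sum_congr rfl fun a _ => Finset.sum_congr rfl fun e _ => ?_
    ring

end WNproof

theorem WN_preserves_symmetric_polynomials {n : ℕ} (Δ : Nat.Partition n)
    (g : Equiv.Perm (Fin n)) (hg : fullCycleType g = Δ.parts) (N : ℕ) (hN : 1 ≤ N)
    (F : MvPolynomial ℕ+ ℚ) :
    ∃ G : MvPolynomial ℕ+ ℚ, WN N Δ g (psubst N F) = psubst N G := by
  have h := WNproof.contract N n g _ (WNproof.foldr_T N F n)
  obtain ⟨G, hG⟩ := (WNproof.A N).smul_mem h (kappa Δ.parts)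
  exact ⟨G, hG.symm⟩
end

section
/- For any N ≥ 1, any indices a, b, a', b' ∈ {1,…,N}, and any polynomial F in the variables p₁, p₂, …, the normally ordered second-order operator acts on F(p(X)) by :D_{a'b'}D_{ab}:(F(p(X))) = Σ_k k·(Σ_{j=1}^{k−1} (X^j)_{ab'}(X^{k−j})_{a'b})·(∂F/∂p_k)(p(X)) + Σ_{k,l} k·l·(X^k)_{ab}(X^l)_{a'b'}·(∂²F/∂p_k∂p_l)(p(X)). -/
open scoped Classical
open MvPolynomial

theorem chain_aux (N : ℕ) (d : Derivation ℚ (RN N) (RN N)) (F : MvPolynomial ℕ+ ℚ) :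
    ∃ s0 : Finset ℕ+, ∀ s, s0 ⊆ s → (∀ k, k ∉ s → pderiv k F = 0) ∧
      d (psubst N F) = ∑ k ∈ s, d (pSub N k) * psubst N (pderiv k F) := by
  induction F using MvPolynomial.induction_on with
  | C r =>
    refine ⟨∅, fun s _ => ⟨fun k _ => by simp, ?_⟩⟩
    simp [psubst, MvPolynomial.algebraMap_eq]
  | add p q hp hq =>
    obtain ⟨s1, h1⟩ := hp
    obtain ⟨s2, h2⟩ := hq
    refine ⟨s1 ∪ s2, fun s hs => ?_⟩
    obtain ⟨h3, h4⟩ := h1 s (Finset.union_subset_left hs)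
    obtain ⟨h5, h6⟩ := h2 s (Finset.union_subset_right hs)
    refine ⟨fun k hk => by simp [h3 k hk, h5 k hk], ?_⟩
    simp only [map_add, h4, h6, mul_add, Finset.sum_add_distrib]
  | mul_X p i hp =>
    obtain ⟨s1, h1⟩ := hp
    refine ⟨insert i s1, fun s hs => ?_⟩
    obtain ⟨h3, h4⟩ := h1 s ((Finset.subset_insert _ _).trans hs)
    have hi : i ∈ s := hs (Finset.mem_insert_self _ _)
    refine ⟨fun k hk => ?_, ?_⟩
    · have : i ≠ k := fun h => hk (h ▸ hi)
      simp [Derivation.leibniz, h3 k hk, pderiv_X_of_ne this]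
    · have hX : psubst N (X i) = pSub N i := by simp [psubst]
      simp only [map_mul, Derivation.leibniz, h4, smul_eq_mul, map_add, mul_add,
        Finset.sum_add_distrib, hX]
      congr 1
      · rw [Finset.sum_eq_single_of_mem i hi]
        · simp [mul_comm]
        · intro k _ hk
          simp [pderiv_X_of_ne hk.symm]
      · rw [Finset.mul_sum]
        exact Finset.sum_congr rfl fun k _ => by ring

theorem pderiv_pow_aux (N : ℕ) (b e : Fin N) (n : ℕ) (i j : Fin N) :
    pderiv (b, e) ((XM N ^ n) i j) =
      ∑ m ∈ Finset.range n, (XM N ^ m) i b * (XM N ^ (n - 1 - m)) e j := by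
  induction n generalizing j with
  | zero => by_cases h : i = j <;> simp [Matrix.one_apply, h]
  | succ n ih =>
    rw [pow_succ, Matrix.mul_apply, map_sum, Finset.sum_range_succ]
    simp only [Derivation.leibniz, smul_eq_mul, Finset.sum_add_distrib]
    rw [add_comm]
    congr 1
    · simp only [ih, Finset.mul_sum]
      rw [Finset.sum_comm]
      refine Finset.sum_congr rfl fun m hm => ?_
      have : n + 1 - 1 - m = (n - 1 - m) + 1 := by
        have := Finset.mem_range.1 hm; omega
      rw [this, pow_succ, Matrix.mul_apply, Finset.mul_sum]
      exact Finset.sum_congr rfl fun k _ => by ring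
    · rw [Finset.sum_eq_single_of_mem b (Finset.mem_univ _)]
      · by_cases h : e = j
        · simp [XM, h]
        · have h2 : ((b, j) : Fin N × Fin N) ≠ (b, e) := fun h' => h (by simpa using h'.symm)
          simp [XM, h, pderiv_X_of_ne h2]
      · intro k _ hk
        have h2 : ((k, j) : Fin N × Fin N) ≠ (b, e) := fun h' => hk (by simpa using congrArg Prod.fst h')
        simp [XM, pderiv_X_of_ne h2]

theorem pderiv_pSub_aux (N : ℕ) (b e : Fin N) (k : ℕ+) :
    pderiv (b, e) (pSub N k) = (k : ℕ) * (XM N ^ ((k : ℕ) - 1)) e b := by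
  simp only [pSub, Matrix.trace, Matrix.diag_apply, map_sum, pderiv_pow_aux]
  rw [Finset.sum_comm]
  refine (Finset.sum_congr rfl (g := fun _ => (XM N ^ ((k : ℕ) - 1)) e b) ?_).trans ?_
  rotate_left
  · simp
  · intro m hm
    have : (k : ℕ) - 1 = ((k : ℕ) - 1 - m) + m := by
      have := Finset.mem_range.1 hm; omega
    conv_rhs => rw [this, pow_add, Matrix.mul_apply]
    exact Finset.sum_congr rfl fun k _ => by ring

theorem sum_X_aux (N : ℕ) (a b : Fin N) (n : ℕ) :
    ∑ e, (X (a, e) : RN N) * (XM N ^ n) e b = (XM N ^ (n + 1)) a b := by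
  rw [pow_succ', Matrix.mul_apply]; rfl

theorem pderiv2_aux (N : ℕ) (a b a' b' : Fin N) (k : ℕ+) :
    ∑ e1, ∑ e2, X (a', e1) * X (a, e2) * pderiv (b', e1) (pderiv (b, e2) (pSub N k)) =
      (k : ℕ) * ∑ j ∈ Finset.Ico 1 (k : ℕ), (XM N ^ j) a b' * (XM N ^ ((k : ℕ) - j)) a' b := by
  have h : ∀ j ∈ Finset.range ((k : ℕ) - 1),
      (XM N ^ (1 + j)) a b' * (XM N ^ ((k : ℕ) - (1 + j))) a' b =
      ∑ e1, ∑ e2, X (a', e1) * X (a, e2) *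
        ((XM N ^ j) e2 b' * (XM N ^ ((k : ℕ) - 1 - 1 - j)) e1 b) := by
    intro j hj
    have : (k : ℕ) - (1 + j) = ((k : ℕ) - 1 - 1 - j) + 1 := by
      have := Finset.mem_range.1 hj; omega
    rw [this, add_comm 1 j, ← sum_X_aux, ← sum_X_aux, Finset.sum_mul_sum, Finset.sum_comm]
    exact Finset.sum_congr rfl fun _ _ => Finset.sum_congr rfl fun _ _ => by ring
  rw [Finset.sum_Ico_eq_sum_range, Finset.sum_congr rfl h]
  conv_rhs => rw [Finset.sum_comm, Finset.mul_sum]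
  refine Finset.sum_congr rfl fun e1 _ => ?_
  conv_rhs => rw [Finset.sum_comm, Finset.mul_sum]
  refine Finset.sum_congr rfl fun e2 _ => ?_
  rw [pderiv_pSub_aux, Derivation.leibniz, Derivation.map_natCast, pderiv_pow_aux,
    ← Finset.mul_sum]
  simp only [smul_eq_mul]
  ring

theorem pderiv11_aux (N : ℕ) (a b : Fin N) (k : ℕ+) :
    ∑ e, X (a, e) * pderiv (b, e) (pSub N k) = (k : ℕ) * (XM N ^ (k : ℕ)) a b := by
  have : (XM N ^ (k : ℕ)) a b = (XM N ^ ((k : ℕ) - 1 + 1)) a b := by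
    rw [Nat.sub_add_cancel k.pos]
  rw [this, ← sum_X_aux, Finset.mul_sum]
  exact Finset.sum_congr rfl fun e _ => by rw [pderiv_pSub_aux]; ring

theorem chain_all (N : ℕ) (F : MvPolynomial ℕ+ ℚ) :
    ∃ s0 : Finset ℕ+, ∀ s, s0 ⊆ s → (∀ k, k ∉ s → pderiv k F = 0) ∧
      ∀ v, pderiv v (psubst N F) = ∑ k ∈ s, pderiv v (pSub N k) * psubst N (pderiv k F) := by
  choose t ht using fun v => chain_aux N (pderiv v) F
  obtain ⟨u, hu⟩ := chain_aux N 0 F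
  refine ⟨u ∪ Finset.univ.biUnion t, fun s hs => ⟨(hu s (Finset.union_subset_left hs)).1,
    fun v => (ht v s ?_).2⟩⟩
  exact (Finset.subset_biUnion_of_mem t (Finset.mem_univ v)).trans (Finset.union_subset_right hs)

theorem normal_ordered_second_order_chain_rule (N : ℕ) (hN : 1 ≤ N)
    (a b a' b' : Fin N) (F : MvPolynomial ℕ+ ℚ) :
    NOpN N ![a', a] ![b', b] (psubst N F) =
      (∑ᶠ k : ℕ+, ((k : ℕ) : ℚ) •
        ((∑ j ∈ Finset.Ico 1 (k : ℕ), ((XM N) ^ j) a b' * ((XM N) ^ ((k : ℕ) - j)) a' b) *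
          psubst N (MvPolynomial.pderiv k F))) +
      ∑ᶠ k : ℕ+, ∑ᶠ l : ℕ+, (((k : ℕ) : ℚ) * ((l : ℕ) : ℚ)) •
        (((XM N) ^ (k : ℕ)) a b * ((XM N) ^ (l : ℕ)) a' b' *
          psubst N (MvPolynomial.pderiv k (MvPolynomial.pderiv l F))) := by
  obtain ⟨s0, h0⟩ := chain_all N F
  choose t ht using fun l => chain_all N (pderiv l F)
  set s := s0 ∪ s0.biUnion t with hs
  obtain ⟨hz, hd⟩ := h0 s Finset.subset_union_left
  have hz0 := (h0 s0 subset_rfl).1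
  have hzz : ∀ k l, k ∉ s → pderiv k (pderiv l F) = 0 := by
    intro k l hk
    by_cases hl : l ∈ s0
    · exact (ht l s ((Finset.subset_biUnion_of_mem t hl).trans Finset.subset_union_right)).1 k hk
    · rw [hz0 l hl, map_zero]
  have hdd : ∀ l v, pderiv v (psubst N (pderiv l F)) =
      ∑ k ∈ s, pderiv v (pSub N k) * psubst N (pderiv k (pderiv l F)) := by
    intro l v
    by_cases hl : l ∈ s0
    · exact (ht l s ((Finset.subset_biUnion_of_mem t hl).trans Finset.subset_union_right)).2 v
    · simp [hz0 l hl]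
  have comm : ∀ k l, pderiv k (pderiv l F) = pderiv l (pderiv k F) := by
    intro k l
    have : ⁅(pderiv k : Derivation ℚ (MvPolynomial ℕ+ ℚ) (MvPolynomial ℕ+ ℚ)),
        (pderiv l : Derivation ℚ (MvPolynomial ℕ+ ℚ) (MvPolynomial ℕ+ ℚ))⁆ = 0 := by
      apply MvPolynomial.derivation_ext
      intro i
      rw [Derivation.commutator_apply]
      simp [pderiv_X, Pi.single_apply, apply_ite]
    have h := congrArg (fun D => D F) this
    simp only [Derivation.commutator_apply] at h
    exact sub_eq_zero.1 h
  rw [finsum_eq_sum_of_support_subset (s := s), finsum_eq_sum_of_support_subset (s := s)]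
  rotate_left
  · intro k hk
    by_contra hks
    apply hk
    simp [hzz k _ (by simpa using hks)]
  · intro k hk
    by_contra hks
    apply hk
    simp [hz k (by simpa using hks)]
  have hin : ∀ k : ℕ+, ∑ᶠ l : ℕ+, (((k : ℕ) : ℚ) * ((l : ℕ) : ℚ)) •
        (((XM N) ^ (k : ℕ)) a b * ((XM N) ^ (l : ℕ)) a' b' *
          psubst N (MvPolynomial.pderiv k (MvPolynomial.pderiv l F))) =
      ∑ l ∈ s, (∑ e, X (a, e) * pderiv (b, e) (pSub N k)) *
        (∑ e, X (a', e) * pderiv (b', e) (pSub N l)) * psubst N (pderiv l (pderiv k F)) := by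
    intro k
    rw [finsum_eq_sum_of_support_subset (s := s)]
    · refine Finset.sum_congr rfl fun l _ => ?_
      rw [pderiv11_aux, pderiv11_aux, comm k l, Algebra.smul_def]
      simp only [map_mul, map_natCast]
      ring
    · intro l hl
      by_contra hls
      apply hl
      simp [hz l (by simpa using hls)]
  have h1 : ∀ k : ℕ+, ((k : ℕ) : ℚ) •
        ((∑ j ∈ Finset.Ico 1 (k : ℕ), ((XM N) ^ j) a b' * ((XM N) ^ ((k : ℕ) - j)) a' b) *
          psubst N (MvPolynomial.pderiv k F)) =
      ∑ e1, ∑ e2, X (a', e1) * X (a, e2) * pderiv (b', e1) (pderiv (b, e2) (pSub N k)) *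
        psubst N (pderiv k F) := by
    intro k
    simp only [← Finset.sum_mul]
    rw [pderiv2_aux, Algebra.smul_def]
    simp only [map_natCast]
    ring
  have hN2 : NOpN N ![a', a] ![b', b] (psubst N F) =
      ∑ e1, ∑ e2, X (a', e1) * X (a, e2) * pderiv (b', e1) (pderiv (b, e2) (psubst N F)) := by
    unfold NOpN
    rw [← (finTwoArrowEquiv (Fin N)).symm.sum_comp, Fintype.sum_prod_type]
    simp [List.ofFn_succ, Fin.prod_univ_two]
  rw [hN2, Finset.sum_congr rfl fun k _ => hin k, Finset.sum_congr rfl fun k _ => h1 k,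
    ← Finset.sum_add_distrib]
  have h3 : ∀ k : ℕ+, ∑ l ∈ s, (∑ e, X (a, e) * pderiv (b, e) (pSub N k)) *
        (∑ e, X (a', e) * pderiv (b', e) (pSub N l)) * psubst N (pderiv l (pderiv k F)) =
      ∑ e1, ∑ e2, X (a', e1) * X (a, e2) *
        (pderiv (b, e2) (pSub N k) * pderiv (b', e1) (psubst N (pderiv k F))) := by
    intro k
    simp only [hdd, Finset.mul_sum]
    rw [Finset.sum_congr rfl fun e1 _ => Finset.sum_comm, Finset.sum_comm]
    refine Finset.sum_congr rfl fun l _ => ?_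
    rw [Finset.sum_mul]
    refine Finset.sum_congr rfl fun e1 _ => ?_
    simp only [Finset.sum_mul]
    exact Finset.sum_congr rfl fun e2 _ => by ring
  simp only [h3, ← Finset.sum_add_distrib]
  conv_rhs => rw [Finset.sum_comm]
  refine Finset.sum_congr rfl fun e1 _ => ?_
  conv_rhs => rw [Finset.sum_comm]
  refine Finset.sum_congr rfl fun e2 _ => ?_
  rw [hd, map_sum, Finset.mul_sum]
  refine Finset.sum_congr rfl fun k _ => ?_
  rw [Derivation.leibniz]
  simp only [smul_eq_mul]
  ring
end
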